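/- arXiv:1111.7263 — 11 statements merged into one kernel-verified Lean document; each statement's English description precedes it below -/
import Mathlib

section
/- Let k be a field of characteristic 0 and let 1 ≤ t ≤ n−1. Then there is a k-algebra isomorphism φ : A_t(n,n) → A_{n−t}(n,n) which is graded in the following sense: for every d ≥ 0, φ maps A_t(n,n) ∩ R_{td} bijectively onto A_{n−t}(n,n) ∩ R_{(n−t)d}, where R_e denotes the k-space of homogeneous polynomials of degree e in R = k[x_{ij} : 1 ≤ i,j ≤ n]. -/
open MvPolynomial

/-- The `s`-minor `[I|J]` of the generic `m × n` matrix `(x_{ij})`, as an element of the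
polynomial ring `k[x_{ij}]`: the determinant of the `s × s` submatrix with row indices `I`
and column indices `J` taken in increasing order. -/
noncomputable def genericMinor (k : Type*) [CommRing k] (m n s : ℕ)
    (I : Finset (Fin m)) (J : Finset (Fin n)) (hI : I.card = s) (hJ : J.card = s) :
    MvPolynomial (Fin m × Fin n) k :=
  Matrix.det (Matrix.of fun a b : Fin s =>
    MvPolynomial.X ((↑(I.orderIsoOfFin hI a) : Fin m), (↑(J.orderIsoOfFin hJ b) : Fin n)))

/-- `A_s(m,n)`: the `k`-subalgebra of `k[x_{ij}]` generated by the `s`-minors of the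
generic `m × n` matrix. -/
noncomputable def minorAlgebra (k : Type*) [CommRing k] (m n s : ℕ) :
    Subalgebra k (MvPolynomial (Fin m × Fin n) k) :=
  Algebra.adjoin k
    {p | ∃ (I : Finset (Fin m)) (J : Finset (Fin n)) (hI : I.card = s) (hJ : J.card = s),
      p = genericMinor k m n s I J hI hJ}


theorem mad_exists_equiv {k P R : Type*} [Field k] [CommRing P] [CommRing R] [Algebra k P]
    [Algebra k R] (α β : P →ₐ[k] R) (A B : Subalgebra k R) (hA : α.range = A) (hB : β.range = B)
    (hker : ∀ F, α F = 0 ↔ β F = 0) :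
    ∃ φ : A ≃ₐ[k] B, ∀ (F : P) (h : α F ∈ A), (φ ⟨α F, h⟩ : R) = β F := by
  subst hA hB
  have hk : RingHom.ker α.rangeRestrict = RingHom.ker β.rangeRestrict := by
    ext F
    simp only [RingHom.mem_ker]
    rw [Subtype.ext_iff, Subtype.ext_iff]
    exact hker F
  refine ⟨((Ideal.quotientKerAlgEquivOfSurjective α.rangeRestrict_surjective).symm.trans
    (Ideal.quotientEquivAlgOfEq k hk)).trans
    (Ideal.quotientKerAlgEquivOfSurjective β.rangeRestrict_surjective), ?_⟩
  intro F h
  have : (Ideal.quotientKerAlgEquivOfSurjective α.rangeRestrict_surjective).symm ⟨α F, h⟩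
      = Ideal.Quotient.mk _ F := by
    rw [AlgEquiv.symm_apply_eq]
    rfl
  simp only [AlgEquiv.trans_apply, this]
  rfl

theorem mad_aeval_hom {k σ R : Type*} [Field k] [CommRing R] [Algebra k R]
    (g : σ → R) (c : R) (F : MvPolynomial σ k) (d : ℕ) (hF : F.IsHomogeneous d) :
    aeval (fun i => c * g i) F = c ^ d * aeval g F := by
  simp only [aeval_def, eval₂_eq, Finset.mul_sum]
  refine Finset.sum_congr rfl fun m hm => ?_
  have hd : ∑ i ∈ m.support, m i = d := by
    have := hF (mem_support_iff.mp hm)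
    rw [← this]; simp [Finsupp.weight_apply, Finsupp.sum]
  simp only [mul_pow, Finset.prod_mul_distrib, Finset.prod_pow_eq_pow_sum, hd]
  ring

theorem mad_transfer {k σ R : Type*} [Field k] [CommRing R] [IsDomain R] [Algebra k R]
    (u v : σ → R) (ψ : R →ₐ[k] R) (c q : R) (hq : q ≠ 0)
    (h : ∀ i, c * ψ (u i) = q * v i) (F : MvPolynomial σ k) (d : ℕ) (hF : F.IsHomogeneous d)
    (h0 : aeval u F = 0) : aeval v F = 0 := by
  have h1 : ψ (aeval u F) = aeval (fun i => ψ (u i)) F := by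
    rw [← AlgHom.comp_apply, comp_aeval]
  have h2 := mad_aeval_hom (fun i => ψ (u i)) c F d hF
  rw [← h1, h0, map_zero, mul_zero] at h2
  simp only [h] at h2
  rw [mad_aeval_hom v q F d hF] at h2
  exact (mul_eq_zero.mp h2).resolve_left (pow_ne_zero _ hq)

theorem mad_comp {k σ τ : Type*} [Field k] (u : σ → MvPolynomial τ k) (t : ℕ) (ht : 1 ≤ t)
    (hu : ∀ i, (u i).IsHomogeneous t) (F : MvPolynomial σ k) (d : ℕ) :
    homogeneousComponent (t * d) (aeval u F) = aeval u (homogeneousComponent d F) := by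
  have hh : ∀ i, (aeval u (homogeneousComponent i F)).IsHomogeneous (t * i) := fun i =>
    (homogeneousComponent_isHomogeneous i F).aeval u hu
  conv_lhs => rw [← sum_homogeneousComponent F]
  simp only [map_sum]
  have : ∀ i ∈ Finset.range (F.totalDegree + 1),
      homogeneousComponent (t * d) (aeval u (homogeneousComponent i F)) =
      if i = d then aeval u (homogeneousComponent i F) else 0 := by
    intro i _
    rw [homogeneousComponent_of_mem (hh i)]
    have : t * d = t * i ↔ i = d := by
      rw [Nat.mul_right_inj (by omega)]; exact eq_comm
    simp only [this]
  rw [Finset.sum_congr rfl this, Finset.sum_ite_eq']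
  split_ifs with h
  · rfl
  · rw [homogeneousComponent_eq_zero, map_zero]
    simpa using h

theorem mad_ker {k σ τ : Type*} [Field k] (u v : σ → MvPolynomial τ k) (t : ℕ) (ht : 1 ≤ t)
    (hu : ∀ i, (u i).IsHomogeneous t) (ψ : MvPolynomial τ k →ₐ[k] MvPolynomial τ k)
    (c q : MvPolynomial τ k) (hq : q ≠ 0)
    (h : ∀ i, c * ψ (u i) = q * v i) (F : MvPolynomial σ k)
    (h0 : aeval u F = 0) : aeval v F = 0 := by
  rw [← sum_homogeneousComponent F, map_sum]
  refine Finset.sum_eq_zero fun d _ => ?_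
  refine mad_transfer u v ψ c q hq h _ d (homogeneousComponent_isHomogeneous d F) ?_
  rw [← mad_comp u t ht hu, h0, map_zero]

theorem mad_det_hom {k τ m : Type*} [Field k] [Fintype m] [DecidableEq m]
    (M : Matrix m m (MvPolynomial τ k)) (hM : ∀ i j, (M i j).IsHomogeneous 1) :
    M.det.IsHomogeneous (Fintype.card m) := by
  rw [Matrix.det_apply]
  refine IsHomogeneous.sum _ _ _ fun s _ => ?_
  have := IsHomogeneous.prod Finset.univ (fun i => M (s i) i) (fun _ => 1) (fun i _ => hM _ _)
  simp only [Finset.sum_const, smul_eq_mul, mul_one, Finset.card_univ] at this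
  rcases Int.units_eq_one_or (Equiv.Perm.sign s) with h | h
  · rw [h, one_smul]; exact this
  · rw [h, Units.neg_smul, one_smul]; exact this.neg

theorem mad_jacobi {R p q n : Type*} [CommRing R] [Fintype p] [Fintype q] [Fintype n]
    [DecidableEq p] [DecidableEq q] [DecidableEq n] (X : Matrix n n R) (e f : p ⊕ q ≃ n) :
    (Equiv.Perm.sign (e.symm.trans f) : ℤ) * X.det *
      (X.adjugate.submatrix (f ∘ Sum.inl) (e ∘ Sum.inl)).det =
    X.det ^ Fintype.card p * (X.submatrix (e ∘ Sum.inr) (f ∘ Sum.inr)).det := by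
  set N := X.adjugate.submatrix f e with hN
  set M := X.submatrix e f with hM
  have hdet : M.det = (Equiv.Perm.sign (e.symm.trans f) : ℤ) * X.det := by
    rw [← Matrix.det_permute', ← Matrix.det_submatrix_equiv_self e]
    congr 1
    ext i j
    simp [hM]
  have hMN : M * N = X.det • 1 := by
    rw [hM, hN, Matrix.submatrix_mul_equiv, Matrix.mul_adjugate, Matrix.submatrix_smul]
    simp [Matrix.submatrix_one_equiv]
  rw [← hdet]
  have hb : M.toBlocks₁₁ * N.toBlocks₁₁ + M.toBlocks₁₂ * N.toBlocks₂₁ = X.det • 1 ∧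
      M.toBlocks₂₁ * N.toBlocks₁₁ + M.toBlocks₂₂ * N.toBlocks₂₁ = 0 := by
    rw [← Matrix.fromBlocks_toBlocks M, ← Matrix.fromBlocks_toBlocks N,
      Matrix.fromBlocks_multiply, ← Matrix.fromBlocks_one, Matrix.fromBlocks_smul,
      Matrix.fromBlocks_inj] at hMN
    exact ⟨hMN.1, by simpa using hMN.2.2.1⟩
  have key : M * Matrix.fromBlocks N.toBlocks₁₁ 0 N.toBlocks₂₁ 1 =
      Matrix.fromBlocks (X.det • 1) M.toBlocks₁₂ 0 M.toBlocks₂₂ := by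
    conv_lhs => rw [← Matrix.fromBlocks_toBlocks M]
    rw [Matrix.fromBlocks_multiply, hb.1, hb.2]
    simp
  have := congrArg Matrix.det key
  rw [Matrix.det_mul, Matrix.det_fromBlocks_zero₁₂, Matrix.det_fromBlocks_zero₂₁,
    Matrix.det_one, mul_one, Matrix.det_smul, Matrix.det_one, mul_one] at this
  exact this

/-- generic matrix -/
noncomputable def madX (k : Type*) [Field k] (n : ℕ) :
    Matrix (Fin n) (Fin n) (MvPolynomial (Fin n × Fin n) k) :=
  Matrix.of fun i j => X (i, j)

theorem madX_det_ne (k : Type*) [Field k] (n : ℕ) : (madX k n).det ≠ 0 :=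
  Matrix.det_mvPolynomialX_ne_zero (Fin n) k

/-- cofactor substitution -/
noncomputable def madψ (k : Type*) [Field k] (n : ℕ) :
    MvPolynomial (Fin n × Fin n) k →ₐ[k] MvPolynomial (Fin n × Fin n) k :=
  aeval fun p => (madX k n).adjugate p.2 p.1

theorem madψ_det (k : Type*) [Field k] (n : ℕ) {p : Type*} [Fintype p] [DecidableEq p]
    (a b : p → Fin n) :
    madψ k n ((madX k n).submatrix a b).det = ((madX k n).adjugate.submatrix b a).det := by
  rw [AlgHom.map_det, ← Matrix.det_transpose]
  congr 1
  ext i j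
  simp [madψ, madX]

/-- index set -/
abbrev madS (n t : ℕ) := {I : Finset (Fin n) // I.card = t}

theorem madS_compl {n t : ℕ} (I : madS n t) : I.1ᶜ.card = n - t := by
  rw [Finset.card_compl, I.2, Fintype.card_fin]

/-- shuffle -/
noncomputable def madE {n t : ℕ} (I : madS n t) : Fin t ⊕ Fin (n - t) ≃ Fin n :=
  finSumEquivOfFinset I.2 (madS_compl I)

noncomputable def madSgn {n t : ℕ} (I J : madS n t) : ℤˣ :=
  Equiv.Perm.sign ((madE I).symm.trans (madE J))

noncomputable def madU (k : Type*) [Field k] (n t : ℕ) (p : madS n t × madS n t) :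
    MvPolynomial (Fin n × Fin n) k :=
  ((madX k n).submatrix (madE p.1 ∘ Sum.inl) (madE p.2 ∘ Sum.inl)).det

noncomputable def madW (k : Type*) [Field k] (n t : ℕ) (p : madS n t × madS n t) :
    MvPolynomial (Fin n × Fin n) k :=
  ((madX k n).submatrix (madE p.1 ∘ Sum.inr) (madE p.2 ∘ Sum.inr)).det

noncomputable def madV (k : Type*) [Field k] (n t : ℕ) (p : madS n t × madS n t) :
    MvPolynomial (Fin n × Fin n) k :=
  ((madSgn p.1 p.2 : ℤ) : MvPolynomial (Fin n × Fin n) k) * madW k n t p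

theorem madSgn_sq {R : Type*} [CommRing R] {n t : ℕ} (I J : madS n t) :
    ((madSgn I J : ℤ) : R) * ((madSgn I J : ℤ) : R) = 1 := by
  rcases Int.units_eq_one_or (madSgn I J) with h | h <;> simp [h]

theorem madU_eq (k : Type*) [Field k] (n t : ℕ) (p : madS n t × madS n t) :
    madU k n t p = genericMinor k n n t p.1.1 p.2.1 p.1.2 p.2.2 := by
  unfold madU genericMinor
  congr 1

theorem madW_eq (k : Type*) [Field k] (n t : ℕ) (p : madS n t × madS n t) :
    madW k n t p =
      genericMinor k n n (n - t) p.1.1ᶜ p.2.1ᶜ (madS_compl _) (madS_compl _) := by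
  unfold madW genericMinor
  congr 1

theorem madUV (k : Type*) [Field k] (n t : ℕ) (p : madS n t × madS n t) :
    (madX k n).det * madψ k n (madU k n t p) = (madX k n).det ^ t * madV k n t p := by
  have h := mad_jacobi (madX k n) (madE p.1) (madE p.2)
  rw [Fintype.card_fin] at h
  rw [madU, madψ_det, madV, madW]
  change ((madSgn p.1 p.2 : ℤ) : MvPolynomial (Fin n × Fin n) k) * _ * _ = _ at h
  have hs := madSgn_sq (R := MvPolynomial (Fin n × Fin n) k) p.1 p.2
  linear_combination ((madSgn p.1 p.2 : ℤ) : MvPolynomial (Fin n × Fin n) k) * h -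
    (madX k n).det * ((madX k n).adjugate.submatrix (madE p.2 ∘ Sum.inl)
      (madE p.1 ∘ Sum.inl)).det * hs

theorem madVU (k : Type*) [Field k] (n t : ℕ) (p : madS n t × madS n t) :
    (madX k n).det * madψ k n (madV k n t p) = (madX k n).det ^ (n - t) * madU k n t p := by
  have h := mad_jacobi (madX k n) ((Equiv.sumComm _ _).trans (madE p.1))
    ((Equiv.sumComm _ _).trans (madE p.2))
  rw [Fintype.card_fin] at h
  have e1 : ((Equiv.sumComm _ _).trans (madE p.1)).symm.trans
      ((Equiv.sumComm _ _).trans (madE p.2)) = (madE p.1).symm.trans (madE p.2) := by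
    ext x; simp
  rw [e1] at h
  rw [madU, madV, map_mul, map_intCast, madW, madψ_det]
  change ((madSgn p.1 p.2 : ℤ) : MvPolynomial (Fin n × Fin n) k) * _ *
    ((madX k n).adjugate.submatrix (madE p.2 ∘ Sum.inr) (madE p.1 ∘ Sum.inr)).det =
    _ * ((madX k n).submatrix (madE p.1 ∘ Sum.inl) (madE p.2 ∘ Sum.inl)).det at h
  linear_combination h

theorem madU_hom (k : Type*) [Field k] (n t : ℕ) (p : madS n t × madS n t) :
    (madU k n t p).IsHomogeneous t := by
  have := mad_det_hom ((madX k n).submatrix (madE p.1 ∘ Sum.inl) (madE p.2 ∘ Sum.inl))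
    (fun i j => isHomogeneous_X _ _)
  rwa [Fintype.card_fin] at this

theorem madV_hom (k : Type*) [Field k] (n t : ℕ) (p : madS n t × madS n t) :
    (madV k n t p).IsHomogeneous (n - t) := by
  have := mad_det_hom ((madX k n).submatrix (madE p.1 ∘ Sum.inr) (madE p.2 ∘ Sum.inr))
    (fun i j => isHomogeneous_X _ _)
  rw [Fintype.card_fin] at this
  unfold madV madW
  rcases Int.units_eq_one_or (madSgn p.1 p.2) with h | h
  · simpa [h] using this
  · simpa [h] using this.neg

theorem madU_range (k : Type*) [Field k] (n t : ℕ) :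
    (aeval (R := k) (madU k n t)).range = minorAlgebra k n n t := by
  rw [← Algebra.adjoin_range_eq_range_aeval, minorAlgebra]
  congr 1
  ext x
  constructor
  · rintro ⟨p, rfl⟩
    exact ⟨_, _, _, _, madU_eq k n t p⟩
  · rintro ⟨I, J, hI, hJ, rfl⟩
    exact ⟨(⟨I, hI⟩, ⟨J, hJ⟩), madU_eq k n t _⟩

theorem madV_range (k : Type*) [Field k] (n t : ℕ) (htn : t ≤ n) :
    (aeval (R := k) (madV k n t)).range = minorAlgebra k n n (n - t) := by
  rw [← Algebra.adjoin_range_eq_range_aeval, minorAlgebra]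
  apply le_antisymm
  · refine Algebra.adjoin_le ?_
    rintro _ ⟨p, rfl⟩
    refine mul_mem (intCast_mem _ _) (Algebra.subset_adjoin ?_)
    exact ⟨_, _, _, _, madW_eq k n t p⟩
  · refine Algebra.adjoin_le ?_
    rintro _ ⟨I', J', hI, hJ, rfl⟩
    obtain ⟨I, rfl⟩ : ∃ I, I' = Iᶜ := ⟨I'ᶜ, by simp⟩
    obtain ⟨J, rfl⟩ : ∃ J, J' = Jᶜ := ⟨J'ᶜ, by simp⟩
    have aux : ∀ K : Finset (Fin n), Kᶜ.card = n - t → K.card = t := by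
      intro K h
      have h1 := Finset.card_add_card_compl K
      rw [Fintype.card_fin] at h1
      omega
    let p : madS n t × madS n t := (⟨I, aux I hI⟩, ⟨J, aux J hJ⟩)
    have h1 : genericMinor k n n (n - t) Iᶜ Jᶜ hI hJ =
        ((madSgn p.1 p.2 : ℤ) : MvPolynomial (Fin n × Fin n) k) * madV k n t p := by
      rw [madV, ← mul_assoc, madSgn_sq, one_mul, madW_eq]
    rw [h1]
    exact mul_mem (intCast_mem _ _) (Algebra.subset_adjoin ⟨p, rfl⟩)

/-- For a field `k` of characteristic `0` and `1 ≤ t ≤ n - 1`, there is a `k`-algebra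
isomorphism `A_t(n,n) ≃ A_{n-t}(n,n)` which, for every `d`, maps the homogeneous elements
of degree `t·d` of `A_t(n,n)` bijectively onto the homogeneous elements of degree
`(n-t)·d` of `A_{n-t}(n,n)`. -/
theorem minorAlgebra_duality (k : Type*) [Field k] [CharZero k] (n t : ℕ)
    (ht : 1 ≤ t) (htn : t ≤ n - 1) :
    ∃ φ : (minorAlgebra k n n t) ≃ₐ[k] (minorAlgebra k n n (n - t)),
      ∀ d : ℕ,
        Set.BijOn (fun x => (φ x : minorAlgebra k n n (n - t)))
          {x : minorAlgebra k n n t |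
            MvPolynomial.IsHomogeneous (x : MvPolynomial (Fin n × Fin n) k) (t * d)}
          {y : minorAlgebra k n n (n - t) |
            MvPolynomial.IsHomogeneous (y : MvPolynomial (Fin n × Fin n) k) ((n - t) * d)} := by
  have hnt : 1 ≤ n - t := by omega
  have hU := madU_range k n t
  have hV := madV_range k n t (by omega)
  have hX := madX_det_ne k n
  obtain ⟨φ, hφ⟩ := mad_exists_equiv (aeval (R := k) (madU k n t)) (aeval (R := k) (madV k n t))
    _ _ hU hV (fun F =>
      ⟨mad_ker _ _ t ht (madU_hom k n t) (madψ k n) _ _ (pow_ne_zero _ hX) (madUV k n t) F,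
       mad_ker _ _ (n - t) hnt (madV_hom k n t) (madψ k n) _ _ (pow_ne_zero _ hX)
        (madVU k n t) F⟩)
  refine ⟨φ, fun d => ⟨?_, φ.injective.injOn, ?_⟩⟩
  · rintro ⟨x, hx⟩ hxd
    obtain ⟨F, rfl⟩ : x ∈ (aeval (R := k) (madU k n t)).range := hU ▸ hx
    have hxd' : (aeval (madU k n t) F).IsHomogeneous (t * d) := hxd
    have e : aeval (madU k n t) F = aeval (madU k n t) (homogeneousComponent d F) := by
      rw [← mad_comp _ t ht (madU_hom k n t), homogeneousComponent_of_mem hxd', if_pos rfl]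
    have hm : aeval (madU k n t) (homogeneousComponent d F) ∈ minorAlgebra k n n t :=
      hU ▸ ⟨_, rfl⟩
    have e2 : (⟨_, hx⟩ : minorAlgebra k n n t) = ⟨_, hm⟩ := Subtype.ext e
    change IsHomogeneous (φ ⟨_, hx⟩ : MvPolynomial (Fin n × Fin n) k) _
    rw [e2, hφ]
    exact (homogeneousComponent_isHomogeneous d F).aeval _ (madV_hom k n t)
  · rintro ⟨y, hy⟩ hyd
    obtain ⟨F, rfl⟩ : y ∈ (aeval (R := k) (madV k n t)).range := hV ▸ hy
    have hyd' : (aeval (madV k n t) F).IsHomogeneous ((n - t) * d) := hyd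
    have e : aeval (madV k n t) F = aeval (madV k n t) (homogeneousComponent d F) := by
      rw [← mad_comp _ (n - t) hnt (madV_hom k n t), homogeneousComponent_of_mem hyd', if_pos rfl]
    have hm : aeval (madU k n t) (homogeneousComponent d F) ∈ minorAlgebra k n n t :=
      hU ▸ ⟨_, rfl⟩
    refine ⟨⟨_, hm⟩, (homogeneousComponent_isHomogeneous d F).aeval _ (madU_hom k n t), ?_⟩
    apply Subtype.ext
    change (φ ⟨_, hm⟩ : MvPolynomial (Fin n × Fin n) k) = _
    rw [hφ]
    exact e.symm
end

section
/- For every commutative ring A and every 3×4 matrix X = (x_{ij}) over A, the determinant of the 3×3 matrix whose rows are indexed by the row pairs (1,2), (1,3), (2,3) and whose columns are indexed by the column pairs (1,2), (1,3), (1,4), with entry [ij|pq] in the row labelled (i,j) and column labelled (p,q), is zero. Explicitly, det [[ [12|12], [12|13], [12|14] ], [ [13|12], [13|13], [13|14] ], [ [23|12], [23|13], [23|14] ]] = 0. -/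
/-- The 2-minor `[ij|pq]` of a 3×4 matrix `x`: the determinant of the 2×2
submatrix with rows `i, j` and columns `p, q`. -/
def minor2 {A : Type*} [CommRing A] (x : Fin 3 → Fin 4 → A)
    (i j : Fin 3) (p q : Fin 4) : A :=
  x i p * x j q - x i q * x j p

/-- The determinant of the 3×3 matrix of 2-minors of a generic 3×4 matrix, with rows
indexed by the row pairs (1,2), (1,3), (2,3) and columns by the column pairs
(1,2), (1,3), (1,4), vanishes. -/
theorem det_of_two_minors_eq_zero (A : Type*) [CommRing A] (x : Fin 3 → Fin 4 → A) :
    Matrix.det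
      !![minor2 x 0 1 0 1, minor2 x 0 1 0 2, minor2 x 0 1 0 3;
         minor2 x 0 2 0 1, minor2 x 0 2 0 2, minor2 x 0 2 0 3;
         minor2 x 1 2 0 1, minor2 x 1 2 0 2, minor2 x 1 2 0 3] = 0 := by
  rw [Matrix.det_fin_three]
  simp [minor2]
  ring
end

section
/- Let 1 ≤ t ≤ m ≤ n and let u, v ∈ {0,…,t} with u ≠ v and u+v even; assume m ≥ t+u and n ≥ t+v. Then the following identity holds in R: the sum over all ordered pairs (I,J) of disjoint u-element sets with I ∪ J = {t−u+1,…,t+u} and all ordered pairs (H,K) of disjoint v-element sets with H ∪ K = {t−v+1,…,t+v} of (−1)^{I,J} (−1)^{H,K} [{1,…,t−u}, I | {1,…,t−v}, H] · [{1,…,t−u}, J | {1,…,t−v}, K] equals 0. (These are the quadratic relations f_{u,v} among the t-minors of the generic m×n matrix.) -/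
open MvPolynomial

/-- The minor `[a₁,…,a_s | b₁,…,b_s]` of the generic `m × n` matrix `(x_{ij})`, where the
row indices `rows` and column indices `cols` are given as lists of 1-based natural
numbers: the determinant of the square submatrix of `(x_{ij})` with rows and columns
taken in the listed order. (The index `a ∈ {1,…,m}` corresponds to `a − 1 : Fin m`.) -/
noncomputable def listMinor (k : Type*) [CommRing k] (m n : ℕ) (rows cols : List ℕ) :
    MvPolynomial (Fin m × Fin n) k :=
  if h : 0 < m ∧ 0 < n then
    Matrix.det (Matrix.of fun i j : Fin rows.length =>
      MvPolynomial.X (⟨(rows.get i - 1) % m, Nat.mod_lt _ h.1⟩,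
        ⟨(cols.getD (j : ℕ) 0 - 1) % n, Nat.mod_lt _ h.2⟩))
  else 0

/-- The number of inversions of a list of natural numbers. -/
def invCount (l : List ℕ) : ℕ :=
  (Finset.univ.filter fun p : Fin l.length × Fin l.length =>
    p.1 < p.2 ∧ l.get p.2 < l.get p.1).card

/-- The increasing list of elements of a finite set of natural numbers. -/
def sortL (A : Finset ℕ) : List ℕ := A.sort (· ≤ ·)


noncomputable def qrD {R : Type*} [CommRing R] {a u N : ℕ} (P : Fin a → Fin N → R)
    (b : Fin a ⊕ Fin u → Fin N) : MultilinearMap R (fun _ : Fin u => Fin N → R) R :=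
  MultilinearMap.currySum
    ((Matrix.detRowAlternating (R := R) (n := Fin a ⊕ Fin u)).toMultilinearMap.compLinearMap
      (fun _ => LinearMap.funLeft R R b)) P

lemma qrD_apply {R : Type*} [CommRing R] {a u N : ℕ} (P : Fin a → Fin N → R)
    (b : Fin a ⊕ Fin u → Fin N) (w : Fin u → Fin N → R) :
    qrD P b w = Matrix.det (Matrix.of fun i j => Sum.elim P w i (b j)) := rfl

lemma qrD_perm {R : Type*} [CommRing R] {a u N : ℕ} (P : Fin a → Fin N → R)
    (b : Fin a ⊕ Fin u → Fin N) (w : Fin u → Fin N → R) (σ : Equiv.Perm (Fin u)) :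
    qrD P b (w ∘ σ) = ((Equiv.Perm.sign σ : ℤ) : R) * qrD P b w := by
  have h := Matrix.det_permute (Equiv.sumCongr (1 : Equiv.Perm (Fin a)) σ)
    (Matrix.of fun i j => Sum.elim P w i (b j))
  rw [Equiv.Perm.sign_sumCongr] at h
  simp only [map_one, one_mul] at h
  rw [qrD_apply, qrD_apply, ← h]
  congr 1
  ext i j
  rcases i with i | i <;> simp

lemma qrD_zero {R : Type*} [CommRing R] {a u N : ℕ} (P : Fin a → Fin N → R)
    (b : Fin a ⊕ Fin u → Fin N) (w : Fin u → Fin N → R) (i : Fin a) (j : Fin u)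
    (h : w j = P i) : qrD P b w = 0 := by
  rw [qrD_apply]
  exact Matrix.det_zero_of_row_eq (i := Sum.inl i) (j := Sum.inr j) (by simp) (by ext; simp [h])

lemma qrD_dep {R : Type*} [CommRing R] [IsDomain R] {a u N : ℕ} (P : Fin a → Fin N → R)
    (b : Fin a ⊕ Fin u → Fin N) (w : Fin u → Fin N → R) (c : Fin a → R) (hc : c ≠ 0)
    (h : ∑ i, c i • P i = 0) : qrD P b w = 0 := by
  rw [qrD_apply]
  apply Matrix.exists_vecMul_eq_zero_iff.1
  refine ⟨Sum.elim c 0, ?_, ?_⟩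
  · intro h0
    apply hc
    ext i
    simpa using congrFun h0 (Sum.inl i)
  · ext j
    have := congrFun h (b j)
    simpa [Matrix.vecMul, dotProduct] using this

noncomputable def qrM {R : Type*} [CommRing R] {a u N : ℕ} (P : Fin a → Fin N → R)
    (b b' : Fin a ⊕ Fin u → Fin N) : MultilinearMap R (fun _ : Fin u ⊕ Fin u => Fin N → R) R :=
  (LinearMap.mul' R R).compMultilinearMap ((qrD P b).domCoprod (qrD P b'))

lemma qrM_apply {R : Type*} [CommRing R] {a u N : ℕ} (P : Fin a → Fin N → R)
    (b b' : Fin a ⊕ Fin u → Fin N) (w : Fin u ⊕ Fin u → Fin N → R) :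
    qrM P b b' w = qrD P b (w ∘ Sum.inl) * qrD P b' (w ∘ Sum.inr) := by
  simp [qrM, Function.comp_def]

lemma qr_core {R : Type*} [CommRing R] [IsDomain R] {a u N : ℕ} (hN : N < a + 2 * u)
    (P : Fin a → Fin N → R)
    (b b' : Fin a ⊕ Fin u → Fin N) (w : Fin u ⊕ Fin u → Fin N → R) :
    ∑ σ : Equiv.Perm (Fin u ⊕ Fin u), ((Equiv.Perm.sign σ : ℤ) : R) * qrM P b b' (w ∘ σ) = 0 := by
  have hA : ∀ v : Fin u ⊕ Fin u → Fin N → R, MultilinearMap.alternatization (qrM P b b') v =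
      ∑ σ : Equiv.Perm (Fin u ⊕ Fin u), ((Equiv.Perm.sign σ : ℤ) : R) * qrM P b b' (v ∘ σ) := by
    intro v
    rw [MultilinearMap.alternatization_apply]
    refine Finset.sum_congr rfl fun σ _ => ?_
    rw [Units.smul_def, zsmul_eq_mul]
    rfl
  rw [← hA]
  have hdep : ¬ LinearIndependent R (Sum.elim P w) := by
    intro h
    have := h.fintype_card_le_finrank
    simp at this
    omega
  rw [Fintype.not_linearIndependent_iff] at hdep
  obtain ⟨g, hg, i0, hi0⟩ := hdep
  rw [Fintype.sum_sum_type] at hg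
  simp only [Sum.elim_inl, Sum.elim_inr] at hg
  by_cases hz : ∃ j, g (Sum.inr j) ≠ 0
  · obtain ⟨j, hj⟩ := hz
    set A := MultilinearMap.alternatization (qrM P b b') with hAdef
    have h1 := congrArg (A.toMultilinearMap.toLinearMap w j) hg
    rw [map_zero, map_add, map_sum, map_sum] at h1
    rw [Finset.sum_eq_zero, zero_add, Finset.sum_eq_single j] at h1
    · rw [map_smul] at h1
      simp at h1
      exact h1.resolve_left hj
    · intro k _ hk
      rw [map_smul]
      simp [A.map_update_self w hk.symm]
    · simp
    · intro i _
      rw [map_smul]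
      simp only [MultilinearMap.toLinearMap_apply, AlternatingMap.coe_multilinearMap]
      rw [hA, Finset.sum_eq_zero, smul_zero]
      intro σ _
      rw [qrM_apply]
      obtain ⟨k, rfl⟩ := σ.surjective j
      rcases k with k | k
      · rw [qrD_zero P b _ i k (by simp)]; simp
      · rw [qrD_zero P b' _ i k (by simp)]; simp
  · push Not at hz
    have h1 : ∑ i, g (Sum.inl i) • P i = 0 := by simpa [hz] using hg
    have hc : (fun i => g (Sum.inl i)) ≠ 0 := by
      rcases i0 with i | i
      · intro h; exact hi0 (congrFun h i)
      · exact absurd (hz i) hi0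
    rw [hA, Finset.sum_eq_zero]
    intro σ _
    rw [qrM_apply, qrD_dep P b _ _ hc h1]; simp

def qrQ {u : ℕ} (s : {s : Finset (Fin (u + u)) // s.card = u}) :
    Fin u ⊕ Fin u ≃ Fin (u + u) :=
  finSumEquivOfFinset s.2 (by rw [Finset.card_compl, s.2, Fintype.card_fin]; omega)

def qrPsi {u : ℕ} (x : {s : Finset (Fin (u + u)) // s.card = u} ×
    (Equiv.Perm (Fin u) × Equiv.Perm (Fin u))) : Equiv.Perm (Fin u ⊕ Fin u) :=
  ((Equiv.sumCongr x.2.1 x.2.2).trans (qrQ x.1)).trans finSumFinEquiv.symm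

lemma qrPsi_bij {u : ℕ} : Function.Bijective (qrPsi (u := u)) := by
  rw [Fintype.bijective_iff_injective_and_card]
  constructor
  · rintro ⟨s, α, β⟩ ⟨s', α', β'⟩ h
    have h2 : (Equiv.sumCongr α β).trans (qrQ s) = (Equiv.sumCongr α' β').trans (qrQ s') := by
      ext1 i
      have := Equiv.congr_fun h i
      simpa [qrPsi] using this
    have key : ∀ (s : {s : Finset (Fin (u + u)) // s.card = u}) (α β : Equiv.Perm (Fin u)),
        (s : Finset (Fin (u+u))) = Finset.univ.image
          (fun i => (Equiv.sumCongr α β).trans (qrQ s) (Sum.inl i)) := by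
      intro s α β
      ext x
      simp only [Finset.mem_image, Finset.mem_univ, true_and]
      constructor
      · intro hx
        rw [← Finset.image_orderEmbOfFin_univ s.1 s.2] at hx
        simp only [Finset.mem_image, Finset.mem_univ, true_and] at hx
        obtain ⟨i, rfl⟩ := hx
        exact ⟨α.symm i, by simp [qrQ]⟩
      · rintro ⟨i, rfl⟩
        simp [qrQ, Finset.orderEmbOfFin_mem]
    have hs : s = s' := by
      apply Subtype.ext
      rw [key s α β, key s' α' β', h2]
    subst hs
    have h3 : ∀ i, Equiv.sumCongr α β i = Equiv.sumCongr α' β' i := fun i =>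
      (qrQ s).injective (Equiv.congr_fun h2 i)
    have hα : α = α' := by
      ext1 i; simpa using h3 (Sum.inl i)
    have hβ : β = β' := by
      ext1 i; simpa using h3 (Sum.inr i)
    rw [hα, hβ]
  · rw [Fintype.card_prod, Fintype.card_prod, Fintype.card_perm, Fintype.card_perm,
      Fintype.card_finset_len]
    simp only [Fintype.card_fin, Fintype.card_sum]
    rw [← mul_assoc]
    have := Nat.add_choose_mul_factorial_mul_factorial u u
    exact this

def qrTau {u : ℕ} (s : {s : Finset (Fin (u + u)) // s.card = u}) : Equiv.Perm (Fin (u + u)) :=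
  finSumFinEquiv.symm.trans (qrQ s)

lemma qr_group {R : Type*} [CommRing R] [IsDomain R] [CharZero R] {a u N : ℕ}
    (hN : N < a + 2 * u) (P : Fin a → Fin N → R)
    (b b' : Fin a ⊕ Fin u → Fin N) (w : Fin (u + u) → Fin N → R) :
    ∑ s : {s : Finset (Fin (u + u)) // s.card = u},
      ((Equiv.Perm.sign (qrTau s) : ℤ) : R) * (qrD P b (fun i => w (qrQ s (Sum.inl i))) *
        qrD P b' (fun i => w (qrQ s (Sum.inr i)))) = 0 := by
  have h := qr_core hN P b b' (w ∘ finSumFinEquiv)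
  rw [← (qrPsi_bij (u := u)).sum_comp, Fintype.sum_prod_type] at h
  have h2 : ∀ (s : {s : Finset (Fin (u + u)) // s.card = u})
      (y : Equiv.Perm (Fin u) × Equiv.Perm (Fin u)),
      ((Equiv.Perm.sign (qrPsi (s, y)) : ℤ) : R) *
        qrM P b b' ((w ∘ finSumFinEquiv) ∘ qrPsi (s, y)) =
      ((Equiv.Perm.sign (qrTau s) : ℤ) : R) * (qrD P b (fun i => w (qrQ s (Sum.inl i))) *
        qrD P b' (fun i => w (qrQ s (Sum.inr i)))) := by
    rintro s ⟨α, β⟩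
    have e1 : Equiv.Perm.sign (qrPsi (s, (α, β))) =
        Equiv.Perm.sign (qrTau s) * (Equiv.Perm.sign α * Equiv.Perm.sign β) := by
      have : qrPsi (s, (α, β)) =
          (finSumFinEquiv.trans ((qrTau s).trans finSumFinEquiv.symm)) *
            Equiv.sumCongr α β := by
        ext1 i
        simp [qrPsi, qrTau]
      rw [this, Equiv.Perm.sign_mul, Equiv.Perm.sign_sumCongr]
      congr 1
      exact Equiv.Perm.sign_trans_trans_symm (qrTau s) finSumFinEquiv
    rw [e1, qrM_apply]
    have e2 : ((w ∘ finSumFinEquiv) ∘ qrPsi (s, (α, β))) ∘ Sum.inl =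
        (fun i => w (qrQ s (Sum.inl i))) ∘ α := by
      ext1 i; simp [qrPsi]
    have e3 : ((w ∘ finSumFinEquiv) ∘ qrPsi (s, (α, β))) ∘ Sum.inr =
        (fun i => w (qrQ s (Sum.inr i))) ∘ β := by
      ext1 i; simp [qrPsi]
    rw [e2, e3, qrD_perm, qrD_perm]
    have sq : ∀ γ : Equiv.Perm (Fin u), ((Equiv.Perm.sign γ : ℤ) : R) *
        ((Equiv.Perm.sign γ : ℤ) : R) = 1 := by
      intro γ
      rw [← Int.cast_mul, ← Units.val_mul, Int.units_mul_self]; simp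
    push_cast
    linear_combination (((Equiv.Perm.sign (qrTau s) : ℤ) : R) *
      (qrD P b (fun i => w (qrQ s (Sum.inl i))) *
        qrD P b' (fun i => w (qrQ s (Sum.inr i))))) *
      (sq α * (((Equiv.Perm.sign β : ℤ) : R) * ((Equiv.Perm.sign β : ℤ) : R)) + sq β)
  simp only [h2, Finset.sum_const] at h
  rw [← Finset.smul_sum] at h
  rw [nsmul_eq_mul] at h
  refine (mul_eq_zero.1 h).resolve_left ?_
  simp

noncomputable def qrLM {R : Type*} [CommRing R] (Y : ℕ → ℕ → R) (rows cols : List ℕ) : R :=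
  Matrix.det (Matrix.of fun i j : Fin rows.length => Y (rows.get i) (cols.getD (j : ℕ) 0))

lemma qrLM_transpose {R : Type*} [CommRing R] (Y : ℕ → ℕ → R) (rows cols : List ℕ)
    (h : rows.length = cols.length) :
    qrLM Y rows cols = qrLM (fun i j => Y j i) cols rows := by
  unfold qrLM
  rw [← Matrix.det_transpose, ← Matrix.det_submatrix_equiv_self (finCongr h).symm]
  congr 1
  ext i j
  simp [List.getD_eq_getElem?_getD, h]

lemma qrLM_ofFn {R : Type*} [CommRing R] (Y : ℕ → ℕ → R) {a u : ℕ} (p : Fin a → ℕ)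
    (q : Fin u → ℕ) (cols : List ℕ) :
    qrLM Y (List.ofFn p ++ List.ofFn q) cols = Matrix.det (Matrix.of fun i j : Fin a ⊕ Fin u =>
      Y (Sum.elim p q i) (cols.getD (finSumFinEquiv j : Fin (a + u)) 0)) := by
  unfold qrLM
  rw [← List.ofFn_fin_append]
  have h : (List.ofFn (Fin.append p q)).length = a + u := by simp
  rw [← Matrix.det_submatrix_equiv_self (finSumFinEquiv.trans (finCongr h).symm)]
  congr 1
  ext i j
  rcases i with i | i <;> simp

lemma qr_sortL {N k : ℕ} (s : Finset (Fin N)) (hs : s.card = k) (e : Fin N ↪ ℕ)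
    (he : StrictMono e) :
    sortL (s.map e) = List.ofFn (fun i => e (s.orderEmbOfFin hs i)) := by
  have h := StrictMonoOn.map_finsetSort e s (he.strictMonoOn _)
  unfold sortL
  rw [← h, ← Finset.listMap_orderEmbOfFin_finRange s hs, List.map_map, List.ofFn_eq_map]
  rfl

lemma qr_inv {R : Type*} [CommRing R] {N : ℕ} (e : Fin N → ℕ)
    (he : StrictMono e) (τ : Equiv.Perm (Fin N)) :
    (-1 : R) ^ invCount (List.ofFn (fun i => e (τ i))) = ((Equiv.Perm.sign τ : ℤ) : R) := by
  have hlen : (List.ofFn (fun i => e (τ i))).length = N := by simp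
  have h1 : invCount (List.ofFn (fun i => e (τ i))) =
      (Finset.univ.filter fun p : Fin N × Fin N => p.1 < p.2 ∧ τ p.2 < τ p.1).card := by
    unfold invCount
    refine Finset.card_equiv ((finCongr hlen).prodCongr (finCongr hlen)) ?_
    rintro ⟨i, j⟩
    simp [he.lt_iff_lt]
    intro _
    rfl
  rw [h1, Equiv.Perm.sign_eq_prod_prod_Iio]
  rw [← Finset.prod_const, Finset.prod_filter, Fintype.prod_prod_type, Finset.prod_comm]
  push_cast
  refine Finset.prod_congr rfl fun j _ => ?_
  rw [← Finset.prod_filter_mul_prod_filter_not Finset.univ (fun i => i < j)]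
  rw [Finset.prod_eq_one (s := Finset.univ.filter fun i => ¬ i < j), mul_one]
  · have : Finset.univ.filter (fun i => i < j) = Finset.Iio j := by ext; simp
    rw [this]
    refine Finset.prod_congr rfl fun i hi => ?_
    rw [Finset.mem_Iio] at hi
    have hne : τ i ≠ τ j := fun h => hi.ne (τ.injective h)
    rcases lt_or_gt_of_ne hne with h | h
    · simp [h, h.le]
    · simp [hi, h, not_lt.2 h.le]
  · intro i hi
    simp at hi
    simp [hi]

def qrE (a N : ℕ) : Fin N ↪ ℕ where
  toFun i := a + 1 + i
  inj' _ _ h := Fin.ext (Nat.add_left_cancel h)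

lemma qrE_apply (a N : ℕ) (i : Fin N) : qrE a N i = a + 1 + i := rfl

lemma qrE_mono (a N : ℕ) : StrictMono (qrE a N) := fun i j h => by
  rw [qrE_apply, qrE_apply]; exact Nat.add_lt_add_left h _

lemma qrE_map (a N : ℕ) : Finset.univ.map (qrE a N) = Finset.Icc (a + 1) (a + N) := by
  ext x
  simp only [Finset.mem_map, Finset.mem_univ, true_and, Finset.mem_Icc, qrE_apply]
  constructor
  · rintro ⟨i, rfl⟩; have := i.2; omega
  · intro h; exact ⟨⟨x - (a + 1), by omega⟩, by simp only []; omega⟩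

lemma qr_list {R : Type*} [CommRing R] [IsDomain R] [CharZero R] (Y : ℕ → ℕ → R)
    {t u N : ℕ} (hu : u ≤ t) (hN : N < t + u) (c c' : List ℕ)
    (hl : c.length = t) (hl' : c'.length = t)
    (hc : ∀ x ∈ c, 1 ≤ x ∧ x ≤ N) (hc' : ∀ x ∈ c', 1 ≤ x ∧ x ≤ N) :
    ∑ I ∈ (Finset.Icc (t - u + 1) (t + u)).powersetCard u,
      (-1 : R) ^ invCount (sortL I ++ sortL (Finset.Icc (t - u + 1) (t + u) \ I)) *
        (qrLM Y (sortL (Finset.Icc 1 (t - u)) ++ sortL I) c *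
        qrLM Y (sortL (Finset.Icc 1 (t - u)) ++
          sortL (Finset.Icc (t - u + 1) (t + u) \ I)) c') = 0 := by
  obtain ⟨a, rfl⟩ : ∃ a, t = a + u := ⟨t - u, by omega⟩
  rw [show a + u - u = a by omega, show a + u + u = a + (u + u) by omega, ← qrE_map a (u + u),
    Finset.powersetCard_map, Finset.sum_map]
  rw [Finset.sum_subtype (p := fun s : Finset (Fin (u + u)) => s.card = u) _
    (by intro s; simp [Finset.mem_powersetCard])]
  have h1 : sortL (Finset.Icc 1 a) = List.ofFn (fun i : Fin a => (i : ℕ) + 1) := by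
    have h2 := StrictMonoOn.map_finsetSort (qrE 0 a) Finset.univ ((qrE_mono 0 a).strictMonoOn _)
    rw [qrE_map, zero_add, zero_add, Fin.sort_univ] at h2
    unfold sortL
    rw [← h2, List.ofFn_eq_map]
    refine List.map_congr_left fun i _ => ?_
    rw [qrE_apply]; omega
  have hget : ∀ (d : List ℕ), d.length = a + u → (∀ x ∈ d, 1 ≤ x ∧ x ≤ N) →
      ∀ j : Fin (a + u), 1 ≤ d.getD j 0 ∧ d.getD j 0 ≤ N := by
    intro d hd hd' j
    rw [List.getD_eq_getElem _ _ (by rw [hd]; exact j.2)]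
    exact hd' _ (List.getElem_mem _)
  let B : ∀ (d : List ℕ), d.length = a + u → (∀ x ∈ d, 1 ≤ x ∧ x ≤ N) →
      Fin a ⊕ Fin u → Fin N := fun d h1 h2 j =>
    ⟨d.getD (finSumFinEquiv j : Fin (a + u)) 0 - 1, by
      have := hget d h1 h2 (finSumFinEquiv j); omega⟩
  have hB : ∀ d h1 h2 j, (B d h1 h2 j : ℕ) + 1 = d.getD (finSumFinEquiv j : Fin (a + u)) 0 := by
    intro d h1 h2 j
    have := hget d h1 h2 (finSumFinEquiv j)
    simp only [B]; omega
  have main := qr_group (R := R) (a := a) (u := u) (N := N) (by omega)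
    (fun i j => Y ((i : ℕ) + 1) ((j : ℕ) + 1)) (B c hl hc) (B c' hl' hc')
    (fun i j => Y (qrE a (u + u) i) ((j : ℕ) + 1))
  rw [← main]
  refine Finset.sum_congr rfl fun s _ => ?_
  have hs' : (s.1ᶜ).card = u := by rw [Finset.card_compl, s.2, Fintype.card_fin]; omega
  have e1 : sortL (s.1.map (qrE a (u + u))) =
      List.ofFn (fun i => qrE a (u + u) (qrQ s (Sum.inl i))) :=
    qr_sortL s.1 s.2 _ (qrE_mono _ _)
  have e2 : sortL (Finset.univ.map (qrE a (u + u)) \ s.1.map (qrE a (u + u))) =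
      List.ofFn (fun i => qrE a (u + u) (qrQ s (Sum.inr i))) := by
    rw [← Finset.map_sdiff, ← Finset.compl_eq_univ_sdiff]
    exact qr_sortL s.1ᶜ hs' _ (qrE_mono _ _)
  simp only [RelEmbedding.coe_toEmbedding, Finset.mapEmbedding_apply]
  rw [e1, e2, h1, qrLM_ofFn, qrLM_ofFn, qrD_apply, qrD_apply]
  congr 1
  · rw [← List.ofFn_fin_append, ← qr_inv (qrE a (u + u)) (qrE_mono _ _)]
    congr 3
    ext i
    obtain ⟨i, rfl⟩ := finSumFinEquiv.surjective i
    simp only [qrTau, Equiv.trans_apply, Equiv.symm_apply_apply]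
    rcases i with i | i
    · rw [finSumFinEquiv_apply_left, Fin.append_left]
    · rw [finSumFinEquiv_apply_right, Fin.append_right]
  · congr 2
    · ext i j
      rcases i with i | i <;> simp [hB]
    · ext i j
      rcases i with i | i <;> simp [hB]

lemma qr_len (A : Finset ℕ) : (sortL A).length = A.card := by simp [sortL]

lemma qr_cols {t v : ℕ} (hv : v ≤ t) (H : Finset ℕ)
    (hH : H ∈ (Finset.Icc (t - v + 1) (t + v)).powersetCard v) :
    (sortL (Finset.Icc 1 (t - v)) ++ sortL H).length = t ∧
    ∀ x ∈ sortL (Finset.Icc 1 (t - v)) ++ sortL H, 1 ≤ x ∧ x ≤ t + v := by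
  rw [Finset.mem_powersetCard] at hH
  constructor
  · rw [List.length_append, qr_len, qr_len, hH.2]; simp; omega
  · intro x hx
    rw [List.mem_append] at hx
    simp only [sortL, Finset.mem_sort] at hx
    rcases hx with hx | hx
    · rw [Finset.mem_Icc] at hx; omega
    · have := Finset.mem_Icc.1 (hH.1 hx); omega

lemma qr_compl {t v : ℕ} (hv : v ≤ t) (H : Finset ℕ)
    (hH : H ∈ (Finset.Icc (t - v + 1) (t + v)).powersetCard v) :
    Finset.Icc (t - v + 1) (t + v) \ H ∈ (Finset.Icc (t - v + 1) (t + v)).powersetCard v := by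
  rw [Finset.mem_powersetCard] at hH ⊢
  refine ⟨Finset.sdiff_subset, ?_⟩
  rw [Finset.card_sdiff_of_subset hH.1, hH.2]; simp; omega

/-- The quadratic relations `f_{u,v}` among the `t`-minors of the generic `m × n` matrix:
for `u ≠ v` in `{0,…,t}` with `u + v` even, the sum over all ordered pairs `(I, J)` of
disjoint `u`-element sets with `I ∪ J = {t−u+1,…,t+u}` (here `J = {t−u+1,…,t+u} \ I`) and
all ordered pairs `(H, K)` of disjoint `v`-element sets with `H ∪ K = {t−v+1,…,t+v}` of
`(−1)^{I,J} (−1)^{H,K} [{1,…,t−u},I | {1,…,t−v},H] · [{1,…,t−u},J | {1,…,t−v},K]`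
vanishes. -/
theorem quadratic_relations (k : Type*) [Field k] [CharZero k] (t m n u v : ℕ)
    (ht : 1 ≤ t) (htm : t ≤ m) (hmn : m ≤ n)
    (hu : u ≤ t) (hv : v ≤ t) (huv : u ≠ v) (hpar : Even (u + v))
    (hmu : t + u ≤ m) (hnv : t + v ≤ n) :
    ∑ I ∈ (Finset.Icc (t - u + 1) (t + u)).powersetCard u,
      ∑ H ∈ (Finset.Icc (t - v + 1) (t + v)).powersetCard v,
        (-1 : MvPolynomial (Fin m × Fin n) k) ^
            invCount (sortL I ++ sortL (Finset.Icc (t - u + 1) (t + u) \ I)) *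
          (-1 : MvPolynomial (Fin m × Fin n) k) ^
            invCount (sortL H ++ sortL (Finset.Icc (t - v + 1) (t + v) \ H)) *
          listMinor k m n (sortL (Finset.Icc 1 (t - u)) ++ sortL I)
            (sortL (Finset.Icc 1 (t - v)) ++ sortL H) *
          listMinor k m n
            (sortL (Finset.Icc 1 (t - u)) ++ sortL (Finset.Icc (t - u + 1) (t + u) \ I))
            (sortL (Finset.Icc 1 (t - v)) ++ sortL (Finset.Icc (t - v + 1) (t + v) \ H))
      = 0 := by
  have hm0 : 0 < m := by omega
  have hn0 : 0 < n := by omega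
  let Y : ℕ → ℕ → MvPolynomial (Fin m × Fin n) k := fun i j =>
    MvPolynomial.X (⟨(i - 1) % m, Nat.mod_lt _ hm0⟩, ⟨(j - 1) % n, Nat.mod_lt _ hn0⟩)
  have hLM : ∀ rows cols, listMinor k m n rows cols = qrLM Y rows cols := by
    intro rows cols
    unfold listMinor qrLM
    rw [dif_pos ⟨hm0, hn0⟩]
  simp only [hLM]
  rcases lt_or_gt_of_ne huv with h | h
  · apply Finset.sum_eq_zero
    intro I hI
    have a1 := qr_cols hu I hI
    have a2 := qr_cols hu _ (qr_compl hu I hI)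
    have := qr_list (fun i j => Y j i) hv (N := t + u) (by omega) _ _ a1.1 a2.1 a1.2 a2.2
    rw [← mul_zero ((-1 : MvPolynomial (Fin m × Fin n) k) ^
      invCount (sortL I ++ sortL (Finset.Icc (t - u + 1) (t + u) \ I))), ← this, Finset.mul_sum]
    refine Finset.sum_congr rfl fun H hH => ?_
    have b1 := qr_cols hv H hH
    have b2 := qr_cols hv _ (qr_compl hv H hH)
    rw [qrLM_transpose Y _ _ (a1.1.trans b1.1.symm), qrLM_transpose Y _ _ (a2.1.trans b2.1.symm)]
    ring
  · rw [Finset.sum_comm]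
    apply Finset.sum_eq_zero
    intro H hH
    have b1 := qr_cols hv H hH
    have b2 := qr_cols hv _ (qr_compl hv H hH)
    have := qr_list Y hu (N := t + v) (by omega) _ _ b1.1 b2.1 b1.2 b2.2
    rw [← mul_zero ((-1 : MvPolynomial (Fin m × Fin n) k) ^
      invCount (sortL H ++ sortL (Finset.Icc (t - v + 1) (t + v) \ H))), ← this, Finset.mul_sum]
    refine Finset.sum_congr rfl fun I hI => ?_
    ring
end

section
/- Let 1 ≤ m ≤ n and let X = {1,…,m} × {1,…,n} be partially ordered by: (i,j) ≤ (h,k) if and only if (i,j) = (h,k), or i < h and j < k. Suppose X = X₁ ∪ … ∪ X_h where each X_i is a chain (any two of its elements are comparable), and set N = |X₁| + … + |X_h|. Then h ≥ N/m + m − 1; equivalently, m·h ≥ N + m(m−1). -/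
/-- Chain-covering lemma: partially order `X = {1,…,m} × {1,…,n}` by
`(i,j) ≤ (h,k) ⇔ (i,j) = (h,k) or (i < h and j < k)`. If `X` is covered by chains
`X₁, …, X_h` and `N = |X₁| + … + |X_h|`, then `m·h ≥ N + m(m−1)`,
i.e. `h ≥ N/m + m − 1`. -/
theorem chain_cover_bound (m n h : ℕ) (hm : 1 ≤ m) (hmn : m ≤ n)
    (Xs : Fin h → Finset (Fin m × Fin n))
    (hchain : ∀ (i : Fin h), ∀ p ∈ Xs i, ∀ q ∈ Xs i,
      p = q ∨ (p.1 < q.1 ∧ p.2 < q.2) ∨ (q.1 < p.1 ∧ q.2 < p.2))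
    (hcover : ∀ p : Fin m × Fin n, ∃ i, p ∈ Xs i) :
    (∑ i, (Xs i).card) + m * (m - 1) ≤ m * h := by
  classical
  have hn : 0 < n := by omega
  have hA : ∀ i : Fin m, ∃ c, (i, (⟨0, hn⟩ : Fin n)) ∈ Xs c := fun i => hcover _
  have hB : ∀ i : Fin m, ∃ c, (i, (⟨n - 1, by omega⟩ : Fin n)) ∈ Xs c := fun i => hcover _
  choose A hA using hA
  choose B hB using hB
  let S : Finset (Σ _ : Fin h, Fin m) := Finset.univ.sigma (fun c => (Xs c).image Prod.fst)
  let f : Fin m × Fin m → (Σ _ : Fin h, Fin m) :=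
    fun p => if p.2 < p.1 then ⟨A p.1, p.2⟩ else ⟨B p.1, p.2⟩
  have hS : S.card = ∑ i, (Xs i).card := by
    rw [Finset.card_sigma]
    refine Finset.sum_congr rfl fun c _ => Finset.card_image_of_injOn ?_
    intro p hp q hq hpq
    have hpq : p.1 = q.1 := hpq
    rcases hchain c p hp q hq with h1 | h1 | h1
    · exact h1
    · exact absurd h1.1 (by rw [hpq]; exact lt_irrefl _)
    · exact absurd h1.1 (by rw [hpq]; exact lt_irrefl _)
  have hAi : ∀ i i', A i = A i' → i = i' := by
    intro i i' e
    have h1 := hA i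
    rw [e] at h1
    rcases hchain _ _ h1 _ (hA i') with h2 | h2 | h2
    · exact congrArg Prod.fst h2
    · exact absurd h2.2 (lt_irrefl _)
    · exact absurd h2.2 (lt_irrefl _)
  have hBi : ∀ i i', B i = B i' → i = i' := by
    intro i i' e
    have h1 := hB i
    rw [e] at h1
    rcases hchain _ _ h1 _ (hB i') with h2 | h2 | h2
    · exact congrArg Prod.fst h2
    · exact absurd h2.2 (lt_irrefl _)
    · exact absurd h2.2 (lt_irrefl _)
  have hAB : ∀ i i', A i = B i' → i ≤ i' := by
    intro i i' e
    have h1 := hA i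
    rw [e] at h1
    rcases hchain _ _ h1 _ (hB i') with h2 | h2 | h2
    · exact le_of_eq (congrArg Prod.fst h2)
    · exact h2.1.le
    · have := h2.2
      simp [Fin.lt_def] at this
  have hinj : Set.InjOn f (Finset.univ.offDiag : Finset (Fin m × Fin m)) := by
    rintro ⟨i, r⟩ h1 ⟨i', r'⟩ h2 e
    have h1 : i ≠ r := by simpa using h1
    have h2 : i' ≠ r' := by simpa using h2
    simp only [f] at e
    split_ifs at e with a b b <;>
      simp only [Sigma.mk.injEq, heq_eq_eq] at e <;> obtain ⟨e, rfl⟩ := e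
    · rw [hAi _ _ e]
    · have := hAB _ _ e
      exact absurd (lt_of_lt_of_le a this) b
    · have := hAB _ _ e.symm
      exact absurd (lt_of_lt_of_le b this) a
    · rw [hBi _ _ e]
  have hdisj : Disjoint S ((Finset.univ.offDiag : Finset (Fin m × Fin m)).image f) := by
    rw [Finset.disjoint_right]
    intro x hx hxS
    obtain ⟨⟨i, r⟩, h1, rfl⟩ := Finset.mem_image.1 hx
    have h1 : i ≠ r := by simpa using h1
    simp only [f, S] at hxS
    split_ifs at hxS with a
    · obtain ⟨q, hq, hqr⟩ := Finset.mem_image.1 (Finset.mem_sigma.1 hxS).2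
      simp only at hqr hq a
      rcases hchain _ _ hq _ (hA i) with h2 | h2 | h2
      · rw [h2] at hqr; exact h1 hqr
      · have := h2.2
        simp [Fin.lt_def] at this
      · rw [hqr] at h2; exact absurd h2.1 a.asymm
    · obtain ⟨q, hq, hqr⟩ := Finset.mem_image.1 (Finset.mem_sigma.1 hxS).2
      simp only at hqr hq a
      rcases hchain _ _ hq _ (hB i) with h2 | h2 | h2
      · rw [h2] at hqr; exact h1 hqr
      · rw [hqr] at h2; exact a h2.1
      · have := h2.2
        have h3 := q.2.isLt
        simp only [Fin.lt_def] at this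
        omega
  have hcard := Finset.card_le_univ (S ∪ (Finset.univ.offDiag : Finset (Fin m × Fin m)).image f)
  rw [Finset.card_union_of_disjoint hdisj, Finset.card_image_of_injOn hinj, hS,
    Finset.offDiag_card] at hcard
  simp only [Finset.card_univ, Fintype.card_fin, Fintype.card_sigma, Finset.sum_const,
    smul_eq_mul] at hcard
  rw [Nat.mul_sub, mul_one, mul_comm m h]
  exact hcard
end

section
/- Let t ≥ 1, d ≥ 2, and let λ be a (t,d)-admissible partition with exactly k nonzero parts λ₁ ≥ … ≥ λ_k ≥ 1. Then λ has exactly one t-predecessor if and only if either λ₁ = λ₂ = … = λ_k (λ is a rectangle), or k = d and there is an index i with 1 ≤ i < d such that λ₁ = … = λ_i > λ_{i+1} = … = λ_d (λ is a fat hook with d rows). -/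
/-- A `(t,d)`-admissible partition, encoded as a weakly decreasing function `ℕ → ℕ`
(0-indexed parts, padded with zeros): it has at most `d` nonzero parts and its parts sum
to `t·d`. -/
def IsAdmissible (t d : ℕ) (lam : ℕ → ℕ) : Prop :=
  (∀ ⦃i j : ℕ⦄, i ≤ j → lam j ≤ lam i) ∧ (∀ i, d ≤ i → lam i = 0) ∧
    (∑ i ∈ Finset.range d, lam i) = t * d

/-- `α` is a `t`-predecessor of the `(t,d)`-admissible partition `lam`:
`α` is `(t,d−1)`-admissible, `α₁ ≤ λ₁ ≤ α₁ + t`, and `α_i ≤ λ_i ≤ α_{i−1}` for `i ≥ 2`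
(in 0-indexed form: `α i ≤ lam i ≤ α (i-1)` for all `i ≥ 1`). -/
def IsPred (t d : ℕ) (α lam : ℕ → ℕ) : Prop :=
  IsAdmissible t (d - 1) α ∧ α 0 ≤ lam 0 ∧ lam 0 ≤ α 0 + t ∧
    ∀ i, 1 ≤ i → α i ≤ lam i ∧ lam i ≤ α (i - 1)

/-- Lower bounds of the box of predecessors. -/
def lowB (t : ℕ) (lam : ℕ → ℕ) (i : ℕ) : ℕ :=
  max (lam (i + 1)) (if i = 0 then lam 0 - t else 0)

lemma isPred_iff (t n : ℕ) (α lam : ℕ → ℕ) (hadm : IsAdmissible t (n + 1) lam) (hn : 1 ≤ n) :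
    IsPred t (n + 1) α lam ↔ ((∀ i < n, lowB t lam i ≤ α i ∧ α i ≤ lam i) ∧
      (∀ i, n ≤ i → α i = 0) ∧ ∑ i ∈ Finset.range n, α i = t * n) := by
  obtain ⟨hanti, hz, hs⟩ := hadm
  unfold IsPred IsAdmissible lowB
  simp only [Nat.add_sub_cancel]
  constructor
  · rintro ⟨⟨h1, h2, h3⟩, h4, h5, h6⟩
    refine ⟨fun i hi => ?_, h2, h3⟩
    have a := (h6 (i + 1) (by omega)).2
    simp only [Nat.add_sub_cancel] at a
    rcases Nat.eq_zero_or_pos i with rfl | h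
    · simp at a ⊢; omega
    · have := (h6 i h).1
      have h0 : i ≠ 0 := by omega
      simp [h0]; omega
  · rintro ⟨h1, h2, h3⟩
    have hle : ∀ i, α i ≤ lam i := by
      intro i
      by_cases h : i < n
      · exact (h1 i h).2
      · rw [h2 i (by omega)]; omega
    have hge : ∀ i, lam (i + 1) ≤ α i := by
      intro i
      by_cases h : i < n
      · exact le_trans (le_max_left _ _) (h1 i h).1
      · rw [hz (i + 1) (by omega)]; omega
    refine ⟨⟨?_, h2, h3⟩, hle 0, ?_, ?_⟩
    · have : Antitone α := antitone_nat_of_succ_le fun i => (hle (i + 1)).trans (hge i)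
      exact fun i j h => this h
    · have := (h1 0 (by omega)).1
      simp at this; omega
    · intro i hi
      refine ⟨hle i, ?_⟩
      have := hge (i - 1)
      rwa [Nat.sub_add_cancel hi] at this

lemma box_exists (n : ℕ) : ∀ (L U : ℕ → ℕ) (S : ℕ), (∀ i < n, L i ≤ U i) →
    ∑ i ∈ Finset.range n, L i ≤ S → S ≤ ∑ i ∈ Finset.range n, U i →
    ∃ f : ℕ → ℕ, (∀ i < n, L i ≤ f i ∧ f i ≤ U i) ∧ (∀ i, n ≤ i → f i = 0) ∧
      ∑ i ∈ Finset.range n, f i = S := by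
  induction n with
  | zero =>
    intro L U S _ _ h2
    refine ⟨fun _ => 0, by simp, by simp, ?_⟩
    simp at h2 ⊢; omega
  | succ n ih =>
    intro L U S h h1 h2
    rw [Finset.sum_range_succ] at h1 h2
    have hn := h n (by omega)
    have hLU : ∑ i ∈ Finset.range n, L i ≤ ∑ i ∈ Finset.range n, U i :=
      Finset.sum_le_sum fun i hi => h i (by simp at hi; omega)
    obtain ⟨v, hv1, hv2, hv3, hv4, hv5⟩ : ∃ v, L n ≤ v ∧ v ≤ U n ∧ v ≤ S ∧
        ∑ i ∈ Finset.range n, L i ≤ S - v ∧ S - v ≤ ∑ i ∈ Finset.range n, U i := by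
      refine ⟨max (L n) (S - ∑ i ∈ Finset.range n, U i), ?_, ?_, ?_, ?_, ?_⟩ <;> omega
    obtain ⟨f, hf1, hf2, hf3⟩ := ih L U (S - v) (fun i hi => h i (by omega)) hv4 hv5
    refine ⟨fun i => if i = n then v else f i, ?_, ?_, ?_⟩
    · intro i hi
      by_cases hin : i = n
      · subst hin; simp; omega
      · simp only [hin, if_false]; exact hf1 i (by omega)
    · intro i hi
      have hin : i ≠ n := by omega
      simp only [hin, if_false]; exact hf2 i (by omega)
    · rw [Finset.sum_range_succ]
      have : ∑ i ∈ Finset.range n, (if i = n then v else f i) = ∑ i ∈ Finset.range n, f i := by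
        refine Finset.sum_congr rfl fun i hi => ?_
        have hin : i ≠ n := by simp at hi; omega
        simp [hin]
      rw [this, hf3]; simp; omega

lemma box_two (n : ℕ) (L U f : ℕ → ℕ) (h : ∀ i < n, L i ≤ f i ∧ f i ≤ U i)
    (h1 : ∑ i ∈ Finset.range n, L i < ∑ i ∈ Finset.range n, f i)
    (h2 : ∑ i ∈ Finset.range n, f i < ∑ i ∈ Finset.range n, U i)
    (p q : ℕ) (hp : p < n) (hq : q < n) (hpq : p ≠ q) (hp' : L p < U p) (hq' : L q < U q) :
    ∃ i j, i < n ∧ j < n ∧ i ≠ j ∧ L i < f i ∧ f j < U j := by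
  obtain ⟨i, hi, hi'⟩ := Finset.exists_lt_of_sum_lt h1
  obtain ⟨j, hj, hj'⟩ := Finset.exists_lt_of_sum_lt h2
  rw [Finset.mem_range] at hi hj
  by_cases hij : i = j
  · subst hij
    obtain ⟨r, hr, hri, hr'⟩ : ∃ r, r < n ∧ r ≠ i ∧ L r < U r := by
      by_cases hpi : p = i
      · exact ⟨q, hq, by omega, hq'⟩
      · exact ⟨p, hp, hpi, hp'⟩
    by_cases hc : f r < U r
    · exact ⟨i, r, hi, hr, hri.symm, hi', hc⟩
    · exact ⟨r, i, hr, hi, hri, by have := h r hr; omega, hj'⟩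
  · exact ⟨i, j, hi, hj, hij, hi', hj'⟩

lemma sum_shift (n : ℕ) (f : ℕ → ℕ) (i j : ℕ) (hi : i < n) (hj : j < n) (hij : i ≠ j)
    (hf : 0 < f i) :
    ∑ k ∈ Finset.range n, (if k = i then f i - 1 else if k = j then f j + 1 else f k)
      = ∑ k ∈ Finset.range n, f k := by
  have hj2 : j ∈ (Finset.range n).erase i := by simp [hj, hij.symm]
  have hi2 : i ∈ Finset.range n := by simpa using hi
  rw [← Finset.add_sum_erase _ _ hi2, ← Finset.add_sum_erase _ _ hj2,
    ← Finset.add_sum_erase _ f hi2, ← Finset.add_sum_erase _ f hj2]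
  have : ∑ k ∈ ((Finset.range n).erase i).erase j,
      (if k = i then f i - 1 else if k = j then f j + 1 else f k)
      = ∑ k ∈ ((Finset.range n).erase i).erase j, f k := by
    refine Finset.sum_congr rfl fun k hk => ?_
    simp at hk
    simp [hk.1, hk.2.1]
  rw [this]
  simp [hij.symm]
  omega

lemma low_le (t n : ℕ) (lam : ℕ → ℕ) (hadm : IsAdmissible t (n + 1) lam) (i : ℕ) :
    lowB t lam i ≤ lam i := by
  unfold lowB
  have := hadm.1 (Nat.le_succ i)
  split_ifs with h
  · subst h; simp at *; omega
  · simpa using this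

lemma sum_bounds (t n : ℕ) (lam : ℕ → ℕ) (hadm : IsAdmissible t (n + 1) lam) (hn : 1 ≤ n) :
    ∑ i ∈ Finset.range n, lowB t lam i ≤ t * n ∧ t * n ≤ ∑ i ∈ Finset.range n, lam i ∧
    (lam n < lam 0 → t * n < ∑ i ∈ Finset.range n, lam i) ∧
    (lam n < lam 0 → 0 < lam 1 → ∑ i ∈ Finset.range n, lowB t lam i < t * n) := by
  obtain ⟨hanti, hz, hs⟩ := hadm
  have a1 : lam n ≤ t := by
    have : ∑ i ∈ Finset.range (n + 1), lam n ≤ ∑ i ∈ Finset.range (n + 1), lam i :=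
      Finset.sum_le_sum fun i hi => hanti (by simp at hi; omega)
    simp [hs] at this
    nlinarith
  have a2 : t ≤ lam 0 := by
    have : ∑ i ∈ Finset.range (n + 1), lam i ≤ ∑ i ∈ Finset.range (n + 1), lam 0 :=
      Finset.sum_le_sum fun i hi => hanti (by simp)
    simp [hs] at this
    nlinarith
  have a3 : lam n < lam 0 → lam n < t := by
    intro h
    have : ∑ i ∈ Finset.range (n + 1), lam n < ∑ i ∈ Finset.range (n + 1), lam i :=
      Finset.sum_lt_sum (fun i hi => hanti (by simp at hi; omega)) ⟨0, by simp, h⟩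
    simp [hs] at this
    nlinarith
  have a4 : lam n < lam 0 → t < lam 0 := by
    intro h
    have : ∑ i ∈ Finset.range (n + 1), lam i < ∑ i ∈ Finset.range (n + 1), lam 0 :=
      Finset.sum_lt_sum (fun i hi => hanti (by simp)) ⟨n, by simp, h⟩
    simp [hs] at this
    nlinarith
  have hU := hs
  rw [Finset.sum_range_succ, Nat.mul_succ] at hU
  obtain ⟨e, rfl⟩ : ∃ e, n = e + 1 := ⟨n - 1, by omega⟩
  have hL : ∑ i ∈ Finset.range (e + 1), lowB t lam i
      = ∑ i ∈ Finset.range e, lam (i + 1 + 1) + max (lam 1) (lam 0 - t) := by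
    rw [Finset.sum_range_succ']
    simp [lowB]
  rw [Finset.sum_range_succ', Finset.sum_range_succ', Nat.mul_succ] at hs
  simp only [zero_add] at hs
  have h10 := hanti (Nat.zero_le 1)
  rw [hL]
  refine ⟨?_, ?_, ?_, ?_⟩
  · omega
  · omega
  · intro h; have := a3 h; omega
  · intro h h'; have := a4 h; omega

lemma exists_pred (t n : ℕ) (lam : ℕ → ℕ) (hadm : IsAdmissible t (n + 1) lam) (hn : 1 ≤ n) :
    ∃ α, IsPred t (n + 1) α lam := by
  obtain ⟨b1, b2, -, -⟩ := sum_bounds t n lam hadm hn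
  obtain ⟨f, hf⟩ := box_exists n (lowB t lam) lam (t * n) (fun i _ => low_le t n lam hadm i) b1 b2
  exact ⟨f, (isPred_iff t n f lam hadm hn).2 hf⟩

lemma unique_of_descent (t n m : ℕ) (lam : ℕ → ℕ) (hadm : IsAdmissible t (n + 1) lam)
    (hn : 1 ≤ n) (h : ∀ i < n, i ≠ m → lam (i + 1) = lam i) :
    ∃! α, IsPred t (n + 1) α lam := by
  obtain ⟨α, hα⟩ := exists_pred t n lam hadm hn
  refine ⟨α, hα, fun β hβ => ?_⟩
  rw [isPred_iff t n _ lam hadm hn] at hα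
  rw [isPred_iff t n _ lam hadm hn] at hβ
  have key : ∀ i, i ≠ m → β i = α i := by
    intro i hi
    by_cases hin : i < n
    · have c1 := hα.1 i hin
      have c2 := hβ.1 i hin
      have c3 : lam (i + 1) ≤ lowB t lam i := le_max_left _ _
      have := h i hin hi
      omega
    · rw [hα.2.1 i (by omega), hβ.2.1 i (by omega)]
  funext i
  by_cases hi : i = m
  · subst hi
    by_cases hin : i < n
    · have hi2 : i ∈ Finset.range n := by simpa using hin
      have s1 := hα.2.2
      have s2 := hβ.2.2
      rw [← Finset.add_sum_erase _ _ hi2] at s1 s2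
      have : ∑ k ∈ (Finset.range n).erase i, β k = ∑ k ∈ (Finset.range n).erase i, α k :=
        Finset.sum_congr rfl fun k hk => key k (by simp at hk; exact hk.1)
      omega
    · rw [hα.2.1 i (by omega), hβ.2.1 i (by omega)]
  · exact key i hi

lemma descent_of_unique (t n : ℕ) (lam : ℕ → ℕ) (ht : 1 ≤ t) (hadm : IsAdmissible t (n + 1) lam)
    (hn : 1 ≤ n) (h : ∃! α, IsPred t (n + 1) α lam) (p q : ℕ) (hpq : p < q) (hq : q < n)
    (hp' : lam (p + 1) < lam p) (hq' : lam (q + 1) < lam q) : False := by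
  obtain ⟨α, hα, hu⟩ := h
  have hanti := hadm.1
  have o1 := hanti (show p + 1 ≤ q by omega)
  have o2 := hanti (show 1 ≤ p + 1 by omega)
  have o3 := hanti (show 0 ≤ p by omega)
  have o4 := hanti (show p + 1 ≤ n by omega)
  obtain ⟨-, -, b3, b4⟩ := sum_bounds t n lam hadm hn
  have b3 := b3 (by omega)
  have b4 := b4 (by omega) (by omega)
  simp only [isPred_iff t n _ lam hadm hn] at hα hu
  have hlow : ∀ r, lam (r + 1) < lam r → lowB t lam r < lam r := by
    intro r hr
    unfold lowB
    split_ifs with h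
    · subst h; simp at *; omega
    · simp; omega
  obtain ⟨hα1, hα2, hα3⟩ := hα
  obtain ⟨i, j, hi, hj, hij, hi', hj'⟩ := box_two n (lowB t lam) lam α hα1 (by omega) (by omega)
    p q (by omega) hq (by omega) (hlow p hp') (hlow q hq')
  have := hu (fun k => if k = i then α i - 1 else if k = j then α j + 1 else α k) ⟨?_, ?_, ?_⟩
  · have := congrFun this i
    simp at this
    omega
  · intro k hk
    have := hα1 k hk
    by_cases h1 : k = i
    · subst h1; simp; omega
    · by_cases h2 : k = j
      · subst h2; simp [h1]; omega
      · simpa [h1, h2] using this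
  · intro k hk
    have h1 : k ≠ i := by omega
    have h2 : k ≠ j := by omega
    simpa [h1, h2] using hα2 k hk
  · rw [sum_shift n α i j hi hj hij (by omega)]; exact hα3

lemma const_of_step (lam : ℕ → ℕ) (a b : ℕ) (h : ∀ i, a ≤ i → i < b → lam (i + 1) = lam i) :
    ∀ i, a ≤ i → i ≤ b → lam i = lam a := by
  intro i hi
  induction i, hi using Nat.le_induction with
  | base => intro _; rfl
  | succ k hk ih => intro hb; rw [h k hk (by omega), ih (by omega)]

/-- A `(t,d)`-admissible partition `lam` with exactly `K` nonzero parts has exactly one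
`t`-predecessor if and only if it is a rectangle (`λ₁ = … = λ_K`) or a fat hook with `d`
rows (`K = d` and `λ₁ = … = λ_i > λ_{i+1} = … = λ_d` for some `1 ≤ i < d`). -/
theorem unique_pred_iff_rectangle_or_fat_hook (t d K : ℕ) (ht : 1 ≤ t) (hd : 2 ≤ d)
    (lam : ℕ → ℕ) (hadm : IsAdmissible t d lam)
    (hK : 1 ≤ K) (hpos : ∀ i < K, 1 ≤ lam i) (hzero : ∀ i, K ≤ i → lam i = 0) :
    (∃! α : ℕ → ℕ, IsPred t d α lam) ↔
      ((∀ i < K, lam i = lam 0) ∨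
        (K = d ∧ ∃ i, 1 ≤ i ∧ i < d ∧ (∀ j < i, lam j = lam 0) ∧
          (∀ j, i ≤ j → j < d → lam j = lam i) ∧ lam i < lam 0)) := by
  obtain ⟨n, rfl⟩ : ∃ n, d = n + 1 := ⟨d - 1, by omega⟩
  have hn : 1 ≤ n := by omega
  have hKd : K ≤ n + 1 := by
    by_contra hc
    have := hpos (n + 1) (by omega)
    rw [hadm.2.1 (n + 1) le_rfl] at this
    omega
  have hanti := hadm.1
  constructor
  · intro h
    by_cases hex : ∃ m < n, lam (m + 1) < lam m
    · obtain ⟨m, hm, hm'⟩ := hex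
      have hstep : ∀ i < n, i ≠ m → lam (i + 1) = lam i := by
        intro i hi him
        by_contra hc
        have : lam (i + 1) < lam i := lt_of_le_of_ne (hanti (Nat.le_succ i)) hc
        rcases Nat.lt_or_gt_of_ne him with hl | hl
        · exact descent_of_unique t n lam ht hadm hn h i m hl hm this hm'
        · exact descent_of_unique t n lam ht hadm hn h m i hl hi hm' this
      have c1 := const_of_step lam 0 m fun i _ hi => hstep i (by omega) (by omega)
      have c2 := const_of_step lam (m + 1) n fun i hi hi' => hstep i hi' (by omega)
      by_cases h0 : lam (m + 1) = 0
      · left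
        intro i hi
        refine c1 i (by omega) ?_
        by_contra hc
        have := hpos i hi
        have := hanti (show m + 1 ≤ i by omega)
        omega
      · right
        refine ⟨?_, m + 1, by omega, by omega, fun j hj => c1 j (by omega) (by omega),
          fun j hj hj' => c2 j hj (by omega), ?_⟩
        · by_contra hc
          have := hzero n (by omega)
          have := c2 n (by omega) le_rfl
          omega
        · rw [← c1 m (by omega) le_rfl]; exact hm'
    · left
      push Not at hex
      intro i hi
      exact const_of_step lam 0 n (fun i _ hi => le_antisymm (hanti (Nat.le_succ i)) (hex i hi))
        i (by omega) (by omega)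
  · rintro (h | ⟨hKn, i, hi1, hi2, h1, h2, h3⟩)
    · refine unique_of_descent t n (K - 1) lam hadm hn fun i hi him => ?_
      by_cases hc : i + 1 < K
      · rw [h i (by omega), h (i + 1) hc]
      · rw [hzero i (by omega), hzero (i + 1) (by omega)]
    · refine unique_of_descent t n (i - 1) lam hadm hn fun k hk hki => ?_
      by_cases hc : k + 1 < i
      · rw [h1 k (by omega), h1 (k + 1) hc]
      · rw [h2 k (by omega) (by omega), h2 (k + 1) (by omega) (by omega)]
end

section
/- Let t ≥ 1, d ≥ 3, and let λ be a (t,d)-admissible partition, written with d entries λ₁ ≥ λ₂ ≥ … ≥ λ_d ≥ 0 (padding with zeros if necessary). Then the following are equivalent: (ii) λ has a unique t-predecessor λ′, and λ′ has a unique t-predecessor; (iii) λ₂ = λ₃ = … = λ_d, or λ₁ = λ₂ = … = λ_{d−1}. -/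
theorem adm_ge {t n : ℕ} {lam : ℕ → ℕ} (h : IsAdmissible t (n+1) lam) : t ≤ lam 0 := by
  obtain ⟨h1, h2, h3⟩ := h
  have : ∑ i ∈ Finset.range (n+1), lam i ≤ ∑ i ∈ Finset.range (n+1), lam 0 :=
    Finset.sum_le_sum fun i _ => h1 (Nat.zero_le i)
  rw [h3] at this
  simp only [Finset.sum_const, Finset.card_range, smul_eq_mul] at this
  rw [mul_comm] at this
  exact Nat.le_of_mul_le_mul_left this (Nat.succ_pos n)

theorem adm_le {t n : ℕ} {lam : ℕ → ℕ} (h : IsAdmissible t (n+1) lam) : lam n ≤ t := by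
  obtain ⟨h1, h2, h3⟩ := h
  have : ∑ i ∈ Finset.range (n+1), lam n ≤ ∑ i ∈ Finset.range (n+1), lam i :=
    Finset.sum_le_sum fun i hi => h1 (by simp at hi; omega)
  rw [h3] at this
  simp only [Finset.sum_const, Finset.card_range, smul_eq_mul] at this
  rw [mul_comm t] at this
  exact Nat.le_of_mul_le_mul_left this (Nat.succ_pos n)

theorem adm_eq {t n : ℕ} {lam : ℕ → ℕ} (h : IsAdmissible t (n+1) lam)
    (h0 : lam 0 = t ∨ lam n = t) : ∀ i, i ≤ n → lam i = t := by
  obtain ⟨h1, h2, h3⟩ := h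
  have hs : ∑ i ∈ Finset.range (n+1), t = t * (n+1) := by simp [mul_comm]
  rcases h0 with h0 | h0
  · have := (Finset.sum_eq_sum_iff_of_le (s := Finset.range (n+1)) (f := lam)
      (g := fun _ => t) (fun i _ => h0 ▸ h1 (Nat.zero_le i))).1 (by rw [h3, hs])
    intro i hi
    exact this i (by simp; omega)
  · have := (Finset.sum_eq_sum_iff_of_le (s := Finset.range (n+1)) (g := lam)
      (f := fun _ => t) (fun i hi => h0 ▸ h1 (by simp at hi; omega))).1 (by rw [h3, hs])
    intro i hi
    exact (this i (by simp; omega)).symm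

/-- two-valued -/
def TwoVal (n k : ℕ) (lam : ℕ → ℕ) : Prop :=
  1 ≤ k ∧ k ≤ n ∧ (∀ i, i < k → lam i = lam 0) ∧ ∀ i, k ≤ i → i ≤ n → lam i = lam n

theorem adm_of_interlace {t n : ℕ} {α lam : ℕ → ℕ} (hl : IsAdmissible t (n+1) lam)
    (hz : ∀ i, n ≤ i → α i = 0)
    (hs : ∑ i ∈ Finset.range n, α i = t * n)
    (h0 : lam 0 ≤ α 0 + t)
    (hb : ∀ i, i < n → lam (i+1) ≤ α i ∧ α i ≤ lam i) (hn : 1 ≤ n) :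
    IsPred t (n+1) α lam := by
  obtain ⟨h1, h2, h3⟩ := hl
  refine ⟨⟨?_, hz, hs⟩, (hb 0 hn).2, h0, ?_⟩
  · have : Antitone α := by
      apply antitone_nat_of_succ_le
      intro i
      by_cases hi : i + 1 < n
      · exact (hb (i+1) hi).2.trans (hb i (by omega)).1
      · rw [hz (i+1) (by omega)]; exact Nat.zero_le _
    exact fun i j hij => this hij
  · intro i hi
    obtain ⟨j, rfl⟩ : ∃ j, i = j + 1 := ⟨i-1, by omega⟩
    simp only [Nat.add_sub_cancel]
    constructor
    · by_cases hj : j + 1 < n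
      · exact (hb _ hj).2
      · rw [hz _ (by omega)]; exact Nat.zero_le _
    · by_cases hj : j < n
      · exact (hb _ hj).1
      · rw [h2 _ (by omega)]; exact Nat.zero_le _

theorem pred_bd {t n : ℕ} {α lam : ℕ → ℕ} (h : IsPred t (n+1) α lam) :
    ∀ i, lam (i+1) ≤ α i ∧ α i ≤ lam i := by
  obtain ⟨_, h0, _, h⟩ := h
  intro i
  refine ⟨(h (i+1) (by omega)).2, ?_⟩
  rcases Nat.eq_zero_or_pos i with rfl | hi
  · exact h0
  · exact (h i hi).1

theorem twoVal_of_unique {t n : ℕ} {α lam : ℕ → ℕ} (ht : 1 ≤ t) (hn : 1 ≤ n)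
    (hl : IsAdmissible t (n+1) lam) (hp : IsPred t (n+1) α lam)
    (hu : ∀ α', IsPred t (n+1) α' lam → α' = α) : ∃ k, TwoVal n k lam := by
  have hb := pred_bd hp
  obtain ⟨⟨hm, hz, hs⟩, -, h0, -⟩ := id hp
  simp only [Nat.add_sub_cancel] at hz hs
  have key : ∀ i j, i < n → j < n → i ≠ j → α i < lam i → lam (j+1) < α j →
      (j = 0 → lam 0 < α 0 + t) → False := by
    intro i j hi hj hij hi' hj' hj0
    set α' : ℕ → ℕ := fun x => if x = i then α i + 1 else if x = j then α j - 1 else α x with hα'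
    have : IsPred t (n+1) α' lam := by
      apply adm_of_interlace hl
      · intro x hx
        simp only [hα']
        rw [if_neg (by omega), if_neg (by omega)]; exact hz x hx
      · rw [← hs]
        have e1 : ∑ x ∈ Finset.range n, (α' x + if x = j then 1 else 0)
            = ∑ x ∈ Finset.range n, (α x + if x = i then 1 else 0) := by
          apply Finset.sum_congr rfl
          intro x _
          simp only [hα']
          by_cases h1 : x = i
          · subst h1; simp [hij]
          · by_cases h2 : x = j
            · subst h2; simp [h1]; omega
            · simp [h1, h2]
        simp only [Finset.sum_add_distrib, Finset.sum_ite_eq', Finset.mem_range, hi, hj, if_true] at e1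
        omega
      · simp only [hα']
        split_ifs with h1 h2
        · subst h1; omega
        · subst h2; have := hj0 rfl; omega
        · exact h0
      · intro x _
        have := hb x
        simp only [hα']
        split_ifs with h1 h2
        · subst h1; omega
        · subst h2; omega
        · exact this
      · exact hn
    have h2 := congrFun (hu _ this) i
    simp [hα'] at h2
  have fin : (∀ i, i ≤ n → lam i = t) → ∃ k, TwoVal n k lam := fun h =>
    ⟨1, le_refl _, hn, fun i hi => by rw [h i (by omega), h 0 (by omega)],
      fun i _ hi => by rw [h i hi, h n le_rfl]⟩
  by_cases hA : ∀ i, i < n → α i = lam i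
  · apply fin
    apply adm_eq hl
    right
    have h3 := hl.2.2
    rw [Finset.sum_range_succ, ← Finset.sum_congr rfl
      (fun i hi => hA i (Finset.mem_range.1 hi)), hs] at h3
    have : t * (n+1) = t * n + t := by ring
    omega
  push Not at hA
  obtain ⟨i, hi, hi'⟩ := hA
  have hi2 : α i < lam i := lt_of_le_of_ne (hb i).2 hi'
  by_cases hB : ∃ j, j < n ∧ lam (j+1) < α j ∧ (j = 0 → lam 0 < α 0 + t)
  · obtain ⟨j, hj, hj1, hj2⟩ := hB
    have hij : i = j := by
      by_contra hij
      exact key i j hi hj hij hi2 hj1 hj2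
    subst hij
    have step : ∀ x, x < n → x ≠ i → lam (x+1) = lam x := by
      intro x hx hxi
      have h1 := hb x
      have h2 : ¬ α x < lam x := fun h => key x i hx hi hxi h hj1 hj2
      have h3 : ¬ (lam (x+1) < α x ∧ (x = 0 → lam 0 < α 0 + t)) := fun h =>
        key i x hi hx (Ne.symm hxi) hi2 h.1 h.2
      by_contra hne
      apply h3
      refine ⟨by omega, ?_⟩
      rintro rfl
      omega
    refine ⟨i+1, by omega, by omega, ?_, ?_⟩
    · intro x
      induction x with
      | zero => intro _; rfl
      | succ x ih => intro hx; rw [step x (by omega) (by omega)]; exact ih (by omega)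
    · intro x hx hxn
      induction hxn using Nat.decreasingInduction with
      | self => rfl
      | of_succ y hy ih => rw [← step y hy (by omega)]; exact ih (by omega)
  · push Not at hB
    obtain ⟨m, rfl⟩ : ∃ m, n = m + 1 := ⟨n-1, by omega⟩
    have hr : ∀ j, j < m → α (j+1) = lam (j+1+1) := by
      intro j hj
      by_contra hne
      have h1 := hb (j+1)
      have := hB (j+1) (by omega) (by omega)
      omega
    have h3 := hl.2.2
    rw [Finset.sum_range_succ', Finset.sum_range_succ'] at h3
    rw [Finset.sum_range_succ', Finset.sum_congr rfl
      (fun i hi => hr i (Finset.mem_range.1 hi))] at hs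
    have e : t * (m+1+1) = t * (m+1) + t := by ring
    simp only [Nat.zero_add] at h3
    by_cases hc : α 0 = lam 1
    · apply fin
      apply adm_eq hl
      left
      omega
    · have h4 := hB 0 (by omega) (by have := hb 0; simp at this ⊢; omega)
      have h5 : lam 1 = 0 := by omega
      have h6 : ∀ x, 1 ≤ x → lam x = 0 := fun x hx => by have := hl.1 hx; omega
      refine ⟨1, le_rfl, by omega, ?_, ?_⟩
      · intro x hx; rw [Nat.lt_one_iff.1 hx]
      · intro x hx _; rw [h6 x hx, h6 (m+1) (by omega)]

theorem twoVal_sum {t n k : ℕ} {lam : ℕ → ℕ} (hl : IsAdmissible t (n+1) lam)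
    (h : TwoVal n k lam) : k * lam 0 + (n + 1 - k) * lam n = t * (n+1) := by
  obtain ⟨h1, h2, h3, h4⟩ := h
  rw [← hl.2.2, ← Finset.sum_range_add_sum_Ico _ (show k ≤ n+1 by omega),
    Finset.sum_congr rfl (fun i hi => h3 i (Finset.mem_range.1 hi)),
    Finset.sum_congr rfl (fun i hi => h4 i (Finset.mem_Ico.1 hi).1
      (by have := (Finset.mem_Ico.1 hi).2; omega))]
  simp

theorem twoVal_pred {t n k : ℕ} {lam : ℕ → ℕ} (hl : IsAdmissible t (n+1) lam)
    (h : TwoVal n k lam) : ∃ α, IsPred t (n+1) α lam ∧ (∀ α', IsPred t (n+1) α' lam → α' = α) ∧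
      (∀ i, i + 1 < k → α i = lam 0) ∧ α (k-1) + t = lam 0 + lam n ∧
      (∀ i, k ≤ i → i < n → α i = lam n) := by
  have hsum := twoVal_sum hl h
  obtain ⟨h1, h2, h3, h4⟩ := h
  have ha := adm_ge hl
  have hb := adm_le hl
  set a := lam 0
  set b := lam n
  set α : ℕ → ℕ := fun i => if i + 1 < k then a else if i + 1 = k then a + b - t else
    if i < n then b else 0 with hα
  have hk : k = (k-1) + 1 := by omega
  have hp : IsPred t (n+1) α lam := by
    apply adm_of_interlace hl
    · intro i hi
      simp only [hα]
      rw [if_neg (by omega), if_neg (by omega), if_neg (by omega)]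
    · rw [← Finset.sum_range_add_sum_Ico _ h2]
      rw [Finset.sum_congr rfl (g := fun _ => b) (s₁ := Finset.Ico k n)
        (fun i hi => by
          have := Finset.mem_Ico.1 hi
          simp only [hα]
          rw [if_neg (by omega), if_neg (by omega), if_pos (by omega)])]
      obtain ⟨j, rfl⟩ : ∃ j, k = j + 1 := ⟨k-1, by omega⟩
      rw [Finset.sum_range_succ, Finset.sum_congr rfl (g := fun _ => a) (s₁ := Finset.range j)
        (fun i hi => by
          have := Finset.mem_range.1 hi
          simp only [hα]
          rw [if_pos (by omega)])]
      have : α j = a + b - t := by simp [hα]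
      rw [this]
      obtain ⟨m, rfl⟩ : ∃ m, n = j + 1 + m := ⟨n - (j+1), by omega⟩
      obtain ⟨c, hc⟩ : ∃ c, c + t = a + b := ⟨a + b - t, by omega⟩
      have e1 : a + b - t = c := by omega
      have e2 : j + 1 + m + 1 - (j+1) = m + 1 := by omega
      rw [e2] at hsum
      simp [e1]
      nlinarith
    · simp only [hα]
      split_ifs
      all_goals omega
    · intro i hi
      simp only [hα]
      split_ifs with g1 g2
      · rw [h3 i (by omega), h3 (i+1) (by omega)]
        exact ⟨le_rfl, le_rfl⟩
      · rw [h3 i (by omega), h4 (i+1) (by omega) (by omega)]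
        change b ≤ _ ∧ _ ≤ a
        omega
      · rw [h4 i (by omega) (by omega), h4 (i+1) (by omega) (by omega)]
        exact ⟨le_rfl, le_rfl⟩
    · omega
  refine ⟨α, hp, ?_, ?_, ?_, ?_⟩
  · intro β hβ
    have hbα := pred_bd hp
    have hbβ := pred_bd hβ
    have hne : ∀ i, i + 1 ≠ k → β i = α i := by
      intro i hi
      by_cases hin : i < n
      · have e : lam (i+1) = lam i := by
          by_cases hik : i + 1 < k
          · rw [h3 _ hik, h3 i (by omega)]
          · rw [h4 i (by omega) (by omega), h4 (i+1) (by omega) (by omega)]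
        have := hbα i
        have := hbβ i
        omega
      · rw [hβ.1.2.1 i (by simpa using hin), hp.1.2.1 i (by simpa using hin)]
    have e := hβ.1.2.2.trans hp.1.2.2.symm
    simp only [Nat.add_sub_cancel] at e
    have hmem : k - 1 ∈ Finset.range n := by simp; omega
    rw [← Finset.add_sum_erase _ _ hmem, ← Finset.add_sum_erase _ _ hmem,
      Finset.sum_congr rfl (fun i hi => hne i (by
        have := (Finset.mem_erase.1 hi).1; omega))] at e
    funext i
    by_cases hi : i + 1 = k
    · have : i = k - 1 := by omega
      rw [this]; exact Nat.add_right_cancel e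
    · exact hne i hi
  · intro i hi; simp only [hα]; rw [if_pos hi]
  · simp only [hα]; rw [if_neg (by omega), if_pos (by omega)]; omega
  · intro i hi hin
    simp only [hα]
    rw [if_neg (by omega), if_neg (by omega), if_pos (by omega)]

/-- For a `(t,d)`-admissible partition `lam` with `d ≥ 3`, the following are equivalent:
(ii) `lam` has a unique `t`-predecessor, which in turn has a unique `t`-predecessor;
(iii) `λ₂ = λ₃ = … = λ_d` or `λ₁ = λ₂ = … = λ_{d−1}` (0-indexed: `lam i = lam 1` for
`1 ≤ i < d`, or `lam i = lam 0` for `i < d − 1`). -/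
theorem unique_two_step_pred_iff (t d : ℕ) (ht : 1 ≤ t) (hd : 3 ≤ d)
    (lam : ℕ → ℕ) (hadm : IsAdmissible t d lam) :
    (∃ α : ℕ → ℕ, IsPred t d α lam ∧ (∀ α', IsPred t d α' lam → α' = α) ∧
        (∃! β : ℕ → ℕ, IsPred t (d - 1) β α)) ↔
      ((∀ i, 1 ≤ i → i < d → lam i = lam 1) ∨ (∀ i, i < d - 1 → lam i = lam 0)) := by

  obtain ⟨n, rfl⟩ : ∃ n, d = n + 1 + 1 := ⟨d - 2, by omega⟩
  simp only [Nat.add_sub_cancel]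
  constructor
  · rintro ⟨α, hp, hu, β, hβ, huβ⟩
    obtain ⟨k, hk⟩ := twoVal_of_unique ht (by omega) hadm hp hu
    have hα : IsAdmissible t (n+1) α := hp.1
    obtain ⟨k', hk'⟩ := twoVal_of_unique ht (by omega) hα hβ huβ
    obtain ⟨α', hp', -, p1, p2, p3⟩ := twoVal_pred hadm hk
    rw [hu _ hp'] at p1 p2 p3
    obtain ⟨q1, q2, q3, q4⟩ := hk
    obtain ⟨r1, r2, r3, r4⟩ := hk'
    by_cases c1 : k = 1
    · left
      intro i hi hin
      rw [q4 i (by omega) (by omega), q4 1 (by omega) (by omega)]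
    by_cases c2 : k = n + 1
    · right
      intro i hi
      exact q3 i (by omega)
    have s0 := p1 0 (by omega)
    have s1 := p3 n (by omega) (by omega)
    have all : ∀ i, i ≤ n + 1 → lam i = t := by
      apply adm_eq hadm
      by_cases hc : k - 1 < k'
      · have := r3 _ hc
        right; omega
      · have := r4 (k-1) (by omega) (by omega)
        left; omega
    left
    intro i hi hin
    rw [all i (by omega), all 1 (by omega)]
  · rintro (h | h)
    · have hk : TwoVal (n+1) 1 lam := ⟨le_rfl, by omega,
        fun i hi => by rw [Nat.lt_one_iff.1 hi],
        fun i hi hin => by rw [h i hi (by omega), h (n+1) (by omega) (by omega)]⟩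
      obtain ⟨α, hp, hu, p1, p2, p3⟩ := twoVal_pred hadm hk
      have hα : IsAdmissible t (n+1) α := hp.1
      obtain ⟨β, hβ, hβu, -⟩ := twoVal_pred (k := 1) hα ⟨le_rfl, by omega,
        fun i hi => by rw [Nat.lt_one_iff.1 hi],
        fun i hi hin => by rw [p3 i hi (by omega), p3 n (by omega) (by omega)]⟩
      exact ⟨α, hp, hu, β, hβ, hβu⟩
    · have hk : TwoVal (n+1) (n+1) lam := ⟨by omega, le_rfl,
        fun i hi => h i hi,
        fun i hi hin => by rw [show i = n + 1 by omega]⟩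
      obtain ⟨α, hp, hu, p1, p2, p3⟩ := twoVal_pred hadm hk
      have hα : IsAdmissible t (n+1) α := hp.1
      obtain ⟨β, hβ, hβu, -⟩ := twoVal_pred (k := n) hα ⟨by omega, le_rfl,
        fun i hi => by rw [p1 i (by omega), p1 0 (by omega)],
        fun i hi hin => by rw [show i = n by omega]⟩
      exact ⟨α, hp, hu, β, hβ, hβu⟩
end

section
/- Let t ≥ 1 and let λ = (λ₁, λ₂, λ₃) be a (t,3)-admissible partition (so λ₁ ≥ λ₂ ≥ λ₃ ≥ 0 and λ₁ + λ₂ + λ₃ = 3t, with at most 3 nonzero parts). Then the number of t-predecessors of λ is exactly min{λ₁ − λ₂, λ₂ − λ₃} + 1. -/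
/-- A `(t,3)`-admissible partition `(a, b, c)` (so `a ≥ b ≥ c ≥ 0`, `a + b + c = 3t`)
has exactly `min (a − b) (b − c) + 1` `t`-predecessors. -/
theorem card_preds_of_admissible_triple (t a b c : ℕ) (ht : 1 ≤ t)
    (hab : b ≤ a) (hbc : c ≤ b) (hsum : a + b + c = 3 * t) :
    {α : ℕ → ℕ | IsPred t 3 α
        (fun i => if i = 0 then a else if i = 1 then b else if i = 2 then c else 0)}.ncard
      = min (a - b) (b - c) + 1 := by
  have key : {α : ℕ → ℕ | IsPred t 3 α
        (fun i => if i = 0 then a else if i = 1 then b else if i = 2 then c else 0)}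
      = (fun x : ℕ => (fun i : ℕ => if i = 0 then x else if i = 1 then 2 * t - x else 0)) ''
        ((Finset.Icc (max b (2 * t - b)) (min a (2 * t - c)) : Finset ℕ) : Set ℕ) := by
    ext α
    simp only [Set.mem_setOf_eq, Set.mem_image, Finset.coe_Icc, Set.mem_Icc, IsPred, IsAdmissible]
    constructor
    · rintro ⟨⟨hm, hz, hs⟩, h0, h1, h2⟩
      have e1 := h2 1 le_rfl
      have e2 := h2 2 (by norm_num)
      simp [Finset.sum_range_succ] at hs h0 h1 e1 e2
      refine ⟨α 0, ⟨by omega, by omega⟩, ?_⟩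
      funext i
      rcases i with _ | _ | i
      · simp
      · simp; omega
      · simp [hz (i + 2) (by omega)]
    · rintro ⟨x, ⟨hx1, hx2⟩, rfl⟩
      refine ⟨⟨?_, ?_, ?_⟩, ?_, ?_, ?_⟩
      · intro i j hij
        dsimp only
        split_ifs <;> omega
      · intro i hi
        dsimp only
        split_ifs <;> omega
      · simp [Finset.sum_range_succ]; omega
      · simp; omega
      · simp; omega
      · intro i hi
        dsimp only
        split_ifs <;> omega
  rw [key, Set.ncard_image_of_injective, Set.ncard_coe_finset, Nat.card_Icc]
  · omega
  · intro x y h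
    simpa using congrFun h 0
end

section
/- Let t ≥ 1 and let λ be a (t,3)-admissible partition. Every t-predecessor of λ is of the form τ_u = (t+u, t−u) for some u ∈ {0,…,t}, the set U(λ) = {u ∈ {0,…,t} : τ_u is a t-predecessor of λ} is a nonempty set of consecutive integers, and consequently: if τ_{u−1} and τ_{u+1} are both t-predecessors of λ then so is τ_u, and the number of even elements of U(λ) and the number of odd elements of U(λ) differ by at most 1. -/
/-- The partition `τ_u = (t+u, t−u)` (0-indexed, padded with zeros). -/
def tauF (t u : ℕ) : ℕ → ℕ :=
  fun i => if i = 0 then t + u else if i = 1 then t - u else 0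

theorem pred_tau_iff (t : ℕ) (lam : ℕ → ℕ) (hadm : IsAdmissible t 3 lam) (u : ℕ) :
    IsPred t 3 (tauF t u) lam ↔ (u ≤ t ∧ t + u ≤ lam 0 ∧ lam 0 ≤ t + u + t ∧
      t - u ≤ lam 1 ∧ lam 1 ≤ t + u ∧ lam 2 ≤ t - u) := by
  obtain ⟨-, h0, -⟩ := hadm
  constructor
  · rintro ⟨⟨-, -, hs⟩, h1, h2, h3⟩
    have h4 := h3 1 le_rfl
    have h5 := h3 2 (by norm_num)
    simp [tauF, Finset.sum_range_succ] at hs h1 h2 h4 h5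
    omega
  · rintro ⟨hu, h1, h2, h3, h4, h5⟩
    refine ⟨⟨?_, ?_, ?_⟩, ?_, ?_, ?_⟩
    · intro i j hij
      simp only [tauF]
      split_ifs <;> omega
    · intro i hi
      simp only [tauF]
      split_ifs <;> omega
    · simp [tauF, Finset.sum_range_succ]
      omega
    · simpa [tauF] using h1
    · simpa [tauF] using h2
    · intro i hi
      by_cases hi1 : i = 1
      · subst hi1
        simp [tauF]
        omega
      by_cases hi2 : i = 2
      · subst hi2
        simp [tauF]
        omega
      · have := h0 i (by omega)
        rw [this]
        simp [tauF, hi1]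
        omega

theorem ncard_aux (A B : Set ℕ) (M : ℕ) (hB : B.Finite)
    (h : ∀ u ∈ A, u ≠ M → u + 1 ∈ B) : A.ncard ≤ B.ncard + 1 := by
  have hsub : A ⊆ insert M ((fun x => x - 1) '' B) := by
    intro u hu
    by_cases hm : u = M
    · exact Or.inl hm
    · exact Or.inr ⟨u + 1, h u hu hm, by simp⟩
  calc A.ncard ≤ (insert M ((fun x => x - 1) '' B)).ncard :=
        Set.ncard_le_ncard hsub ((hB.image _).insert M)
    _ ≤ ((fun x => x - 1) '' B).ncard + 1 := Set.ncard_insert_le _ _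
    _ ≤ B.ncard + 1 := Nat.add_le_add_right (Set.ncard_image_le hB) 1

/-- For a `(t,3)`-admissible partition `lam`: every `t`-predecessor of `lam` is of the
form `τ_u = (t+u, t−u)` with `0 ≤ u ≤ t`; the set
`U(λ) = {u ≤ t : τ_u is a t-predecessor of λ}` is a nonempty set of consecutive integers;
consequently, if `τ_{u−1}` and `τ_{u+1}` are `t`-predecessors of `lam` then so is `τ_u`,
and the numbers of even and of odd elements of `U(λ)` differ by at most 1. -/
theorem preds_of_degree_three_are_tau (t : ℕ) (ht : 1 ≤ t)
    (lam : ℕ → ℕ) (hadm : IsAdmissible t 3 lam) :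
    (∀ α : ℕ → ℕ, IsPred t 3 α lam → ∃ u, u ≤ t ∧ α = tauF t u) ∧
    {u : ℕ | u ≤ t ∧ IsPred t 3 (tauF t u) lam}.Nonempty ∧
    (∀ u v w : ℕ, u ≤ v → v ≤ w →
      u ∈ {u : ℕ | u ≤ t ∧ IsPred t 3 (tauF t u) lam} →
      w ∈ {u : ℕ | u ≤ t ∧ IsPred t 3 (tauF t u) lam} →
      v ∈ {u : ℕ | u ≤ t ∧ IsPred t 3 (tauF t u) lam}) ∧
    (∀ u : ℕ, 1 ≤ u → IsPred t 3 (tauF t (u - 1)) lam →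
      IsPred t 3 (tauF t (u + 1)) lam → IsPred t 3 (tauF t u) lam) ∧
    ({u : ℕ | u ≤ t ∧ IsPred t 3 (tauF t u) lam ∧ Even u}.ncard ≤
        {u : ℕ | u ≤ t ∧ IsPred t 3 (tauF t u) lam ∧ Odd u}.ncard + 1 ∧
      {u : ℕ | u ≤ t ∧ IsPred t 3 (tauF t u) lam ∧ Odd u}.ncard ≤
        {u : ℕ | u ≤ t ∧ IsPred t 3 (tauF t u) lam ∧ Even u}.ncard + 1) := by
  have key := pred_tau_iff t lam hadm
  obtain ⟨hm, h0, hs⟩ := hadm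
  have m1 : lam 1 ≤ lam 0 := hm (by norm_num)
  have m2 : lam 2 ≤ lam 1 := hm (by norm_num)
  simp only [Finset.sum_range_succ, Finset.sum_range_zero] at hs
  refine ⟨?_, ?_, ?_, ?_, ?_, ?_⟩
  · rintro α ⟨⟨ha, hb, hc⟩, -⟩
    have a1 : α 1 ≤ α 0 := ha (by norm_num)
    simp [Finset.sum_range_succ] at hc
    refine ⟨α 0 - t, by omega, ?_⟩
    funext i
    simp only [tauF]
    split_ifs with h h'
    · subst h
      omega
    · subst h'
      omega
    · exact hb i (by omega)
  · refine ⟨min (lam 0 - t) (t - lam 2), ?_⟩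
    simp only [Set.mem_setOf_eq, key]
    omega
  · intro u v w huv hvw hu hw
    simp only [Set.mem_setOf_eq, key] at *
    omega
  · intro u hu h1 h2
    simp only [key] at *
    omega
  · apply ncard_aux _ _ (min (lam 0 - t) (t - lam 2))
    · exact (Set.finite_Iic t).subset fun u hu => hu.1
    · rintro u ⟨h1, h2, h3⟩ hne
      rw [key] at h2
      refine ⟨by omega, (key _).2 (by omega), h3.add_one⟩
  · apply ncard_aux _ _ (min (lam 0 - t) (t - lam 2))
    · exact (Set.finite_Iic t).subset fun u hu => hu.1
    · rintro u ⟨h1, h2, h3⟩ hne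
      rw [key] at h2
      refine ⟨by omega, (key _).2 (by omega), h3.add_one⟩
end

section
/- Let t ≥ 2 and 1 ≤ u ≤ ⌊t/2⌋. Then γ_u = (t+u, t+u, t−2u) and λ_u = (t+2u, t−u, t−u) are distinct (t,3)-admissible partitions, and each of γ_u and λ_u has exactly one t-predecessor, namely τ_u = (t+u, t−u). -/
/-- The partition `γ_u = (t+u, t+u, t−2u)`. -/
def gammaF (t u : ℕ) : ℕ → ℕ :=
  fun i => if i = 0 then t + u else if i = 1 then t + u else if i = 2 then t - 2 * u else 0

/-- The partition `λ_u = (t+2u, t−u, t−u)`. -/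
def lambdaF (t u : ℕ) : ℕ → ℕ :=
  fun i => if i = 0 then t + 2 * u else if i = 1 then t - u else if i = 2 then t - u else 0

/-- For `t ≥ 2` and `1 ≤ u ≤ ⌊t/2⌋`, the partitions `γ_u = (t+u, t+u, t−2u)` and
`λ_u = (t+2u, t−u, t−u)` are distinct `(t,3)`-admissible partitions, and each has exactly
one `t`-predecessor, namely `τ_u = (t+u, t−u)`. -/
theorem even_cubic_shapes (t u : ℕ) (ht : 2 ≤ t) (hu1 : 1 ≤ u) (hu2 : u ≤ t / 2) :
    gammaF t u ≠ lambdaF t u ∧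
    IsAdmissible t 3 (gammaF t u) ∧ IsAdmissible t 3 (lambdaF t u) ∧
    (∀ α : ℕ → ℕ, IsPred t 3 α (gammaF t u) ↔ α = tauF t u) ∧
    (∀ α : ℕ → ℕ, IsPred t 3 α (lambdaF t u) ↔ α = tauF t u) := by
  have h2u : 2 * u ≤ t := by omega
  have ext : ∀ α : ℕ → ℕ, α 0 = t + u → α 1 = t - u → (∀ i, 2 ≤ i → α i = 0) →
      α = tauF t u := by
    intro α h0 h1 h2
    funext i
    rcases i with _ | _ | i
    · simpa [tauF] using h0
    · simpa [tauF] using h1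
    · simpa [tauF] using h2 (i + 2) (by omega)
  have htau : IsAdmissible t 2 (tauF t u) := by
    refine ⟨?_, ?_, ?_⟩
    · intro i j hij
      simp only [tauF]
      split_ifs <;> omega
    · intro i hi
      simp only [tauF]
      split_ifs <;> omega
    · simp [Finset.sum_range_succ, tauF]
      omega
  refine ⟨?_, ⟨?_, ?_, ?_⟩, ⟨?_, ?_, ?_⟩, ?_, ?_⟩
  · intro h
    have h0 := congrFun h 0
    simp [gammaF, lambdaF] at h0
    omega
  · intro i j hij
    simp only [gammaF]
    split_ifs <;> omega
  · intro i hi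
    simp only [gammaF]
    split_ifs <;> omega
  · simp [Finset.sum_range_succ, gammaF]
    omega
  · intro i j hij
    simp only [lambdaF]
    split_ifs <;> omega
  · intro i hi
    simp only [lambdaF]
    split_ifs <;> omega
  · simp [Finset.sum_range_succ, lambdaF]
    omega
  · intro α
    constructor
    · rintro ⟨⟨-, hz, hs⟩, h0, -, hi⟩
      have h1 := (hi 1 le_rfl).2
      simp [gammaF] at h0 h1
      simp [Finset.sum_range_succ] at hs
      exact ext α (by omega) (by omega) hz
    · rintro rfl
      refine ⟨htau, ?_, ?_, ?_⟩
      · simp [gammaF, tauF]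
      · simp [gammaF, tauF]
      · intro i hi
        simp only [gammaF, tauF]
        constructor <;> split_ifs <;> omega
  · intro α
    constructor
    · rintro ⟨⟨-, hz, hs⟩, -, -, hi⟩
      have h1 := (hi 1 le_rfl).1
      have h2 := (hi 2 (by omega)).2
      simp [lambdaF] at h1 h2
      simp [Finset.sum_range_succ] at hs
      exact ext α (by omega) (by omega) hz
    · rintro rfl
      refine ⟨htau, ?_, ?_, ?_⟩
      · simp [lambdaF, tauF]
        omega
      · simp [lambdaF, tauF]
        omega
      · intro i hi
        simp only [lambdaF, tauF]
        constructor <;> split_ifs <;> omega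
end

section
/- Let t ≥ 3 and 2 ≤ u ≤ ⌈t/2⌉. Then ρ_u = (t+u, t+u−1, t−2u+1) and σ_u = (t+2u−1, t−u+1, t−u) are (t,3)-admissible partitions, and each of ρ_u and σ_u has exactly two t-predecessors, namely (t+u, t−u) and (t+u−1, t−u+1). -/
/-- The partition `(t+u−1, t−u+1)` (0-indexed, padded with zeros). -/
def tauF' (t u : ℕ) : ℕ → ℕ :=
  fun i => if i = 0 then t + u - 1 else if i = 1 then t - u + 1 else 0

/-- The partition `ρ_u = (t+u, t+u−1, t−2u+1)`. -/
def rhoF (t u : ℕ) : ℕ → ℕ :=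
  fun i => if i = 0 then t + u else if i = 1 then t + u - 1
    else if i = 2 then t + 1 - 2 * u else 0

/-- The partition `σ_u = (t+2u−1, t−u+1, t−u)`. -/
def sigmaF (t u : ℕ) : ℕ → ℕ :=
  fun i => if i = 0 then t + 2 * u - 1 else if i = 1 then t - u + 1
    else if i = 2 then t - u else 0

/-- For `t ≥ 3` and `2 ≤ u ≤ ⌈t/2⌉`, the partitions `ρ_u = (t+u, t+u−1, t−2u+1)` and
`σ_u = (t+2u−1, t−u+1, t−u)` are `(t,3)`-admissible, and each has exactly two
`t`-predecessors, namely `(t+u, t−u)` and `(t+u−1, t−u+1)`. -/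
theorem odd_cubic_shapes (t u : ℕ) (ht : 3 ≤ t) (hu1 : 2 ≤ u) (hu2 : u ≤ (t + 1) / 2) :
    IsAdmissible t 3 (rhoF t u) ∧ IsAdmissible t 3 (sigmaF t u) ∧
    tauF t u ≠ tauF' t u ∧
    (∀ α : ℕ → ℕ, IsPred t 3 α (rhoF t u) ↔ (α = tauF t u ∨ α = tauF' t u)) ∧
    (∀ α : ℕ → ℕ, IsPred t 3 α (sigmaF t u) ↔ (α = tauF t u ∨ α = tauF' t u)) := by
  have hu3 : 2 * u ≤ t + 1 := by omega
  have fwd : ∀ α : ℕ → ℕ, IsAdmissible t 2 α → (α 1 = t - u ∨ α 1 = t - u + 1) →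
      (α = tauF t u ∨ α = tauF' t u) := by
    rintro α ⟨-, h0, hs⟩ h
    simp only [Finset.sum_range_succ, Finset.sum_range_zero] at hs
    rcases h with h | h
    · left
      funext i
      have := h0 i
      simp only [tauF]
      rcases i with _ | _ | i <;> simp <;> first | omega | exact h | exact h0 _ (by omega)
    · right
      funext i
      simp only [tauF']
      rcases i with _ | _ | i <;> simp <;> first | omega | exact h | exact h0 _ (by omega)
  refine ⟨⟨?_, ?_, ?_⟩, ⟨?_, ?_, ?_⟩, ?_, ?_, ?_⟩
  · intro i j hij
    simp only [rhoF]
    split_ifs <;> omega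
  · intro i hi
    simp only [rhoF]
    split_ifs <;> omega
  · simp [Finset.sum_range_succ, rhoF]
    omega
  · intro i j hij
    simp only [sigmaF]
    split_ifs <;> omega
  · intro i hi
    simp only [sigmaF]
    split_ifs <;> omega
  · simp [Finset.sum_range_succ, sigmaF]
    omega
  · intro h
    have := congrFun h 0
    simp [tauF, tauF'] at this
    omega
  · intro α
    constructor
    · rintro ⟨ha, h1, h2, h3⟩
      refine fwd α ha ?_
      obtain ⟨-, h0, hs⟩ := ha
      have h4 := h3 1 le_rfl
      simp [rhoF, Finset.sum_range_succ] at h1 h2 h4 hs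
      omega
    · rintro (rfl | rfl)
      all_goals
        refine ⟨⟨?_, ?_, ?_⟩, ?_, ?_, ?_⟩
        · intro i j hij
          simp only [tauF, tauF']
          split_ifs <;> omega
        · intro i hi
          simp only [tauF, tauF']
          split_ifs <;> omega
        · simp [Finset.sum_range_succ, tauF, tauF']
          omega
        · simp [tauF, tauF', rhoF]
        · simp [tauF, tauF', rhoF]
          try omega
        · intro i hi
          simp only [tauF, tauF', rhoF]
          constructor <;> split_ifs <;> omega
  · intro α
    constructor
    · rintro ⟨ha, h1, h2, h3⟩
      refine fwd α ha ?_
      obtain ⟨-, h0, hs⟩ := ha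
      have h4 := h3 1 le_rfl
      have h5 := h3 2 (by omega)
      simp [sigmaF, Finset.sum_range_succ] at h1 h2 h4 h5 hs
      omega
    · rintro (rfl | rfl)
      all_goals
        refine ⟨⟨?_, ?_, ?_⟩, ?_, ?_, ?_⟩
        · intro i j hij
          simp only [tauF, tauF']
          split_ifs <;> omega
        · intro i hi
          simp only [tauF, tauF']
          split_ifs <;> omega
        · simp [Finset.sum_range_succ, tauF, tauF']
          omega
        · simp [tauF, tauF', sigmaF]
          try omega
        · simp [tauF, tauF', sigmaF]
          try omega
        · intro i hi
          simp only [tauF, tauF', sigmaF]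
          constructor <;> split_ifs <;> omega
end

section
/- Let t ≥ 1, d ≥ 3, and let γ and λ be distinct (t,d)-admissible partitions. Then the following are equivalent: (a) there is a partition α that is the unique t-predecessor of γ and also the unique t-predecessor of λ, and moreover the chain of iterated t-predecessors below α is everywhere unique (α has a unique t-predecessor, that partition in turn has a unique t-predecessor, and so on down to the partition (t) of degree 1); (b) d = 3 and {γ, λ} = {(t+u, t+u, t−2u), (t+2u, t−u, t−u)} for some integer u with 1 ≤ u ≤ ⌊t/2⌋. -/
/-- `UniqueChainBelow t e μ` says that the chain of iterated `t`-predecessors below the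
degree-`e` partition `μ` is everywhere unique: `μ` has a unique `t`-predecessor, that
partition in turn has a unique `t`-predecessor, and so on down to degree 1, where the
only `(t,1)`-admissible partition is `(t)`. -/
def UniqueChainBelow (t : ℕ) : ℕ → (ℕ → ℕ) → Prop
  | 0, _ => True
  | 1, _ => True
  | (e + 2), mu => ∃ nu : ℕ → ℕ, IsPred t (e + 2) nu mu ∧
      (∀ nu', IsPred t (e + 2) nu' mu → nu' = nu) ∧ UniqueChainBelow t (e + 1) nu

lemma perturb (t d : ℕ) (hd : 3 ≤ d) (lam α : ℕ → ℕ) (hα : IsPred t d α lam)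
    (huniq : ∀ α', IsPred t d α' lam → α' = α) (p q : ℕ) (hp : p < d - 1) (hq : q < d - 1)
    (hpq : p ≠ q) (h1 : lam (p + 1) < α p) (h0 : p = 0 → lam 0 < α 0 + t) (h2 : α q < lam q) :
    False := by
  obtain ⟨⟨ha, hz, hs⟩, hl, hu, hi⟩ := hα
  let β : ℕ → ℕ := fun i => if i = p then α i - 1 else if i = q then α i + 1 else α i
  have hβ : IsPred t d β lam := by
    have key : ∀ i, β i ≤ lam i ∧ lam (i + 1) ≤ β i := by
      intro i
      have e1 : α i ≤ lam i := by
        rcases Nat.eq_zero_or_pos i with h | h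
        · subst h; exact hl
        · exact (hi i h).1
      have e2 := (hi (i + 1) (by omega)).2
      simp only [Nat.add_sub_cancel] at e2
      simp only [β]
      split_ifs with h3 h4
      · subst h3; omega
      · subst h4; omega
      · omega
    refine ⟨⟨?_, ?_, ?_⟩, (key 0).1, ?_, ?_⟩
    · have : Antitone β := antitone_nat_of_succ_le
        (fun n => (key (n + 1)).1.trans (key n).2)
      exact fun i j h => this h
    · intro i h
      have := hz i h
      simp only [β]
      rw [if_neg (by omega), if_neg (by omega), this]
    · rw [← hs]
      have e : ∀ i ∈ Finset.range (d - 1), β i + (if i = p then 1 else 0)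
          = α i + (if i = q then 1 else 0) := by
        intro i _
        simp only [β]
        split_ifs with h3 h4 h4
        · omega
        · subst h3; omega
        · omega
        · omega
      have e' := Finset.sum_congr rfl e
      rw [Finset.sum_add_distrib, Finset.sum_add_distrib, Finset.sum_ite_eq',
        Finset.sum_ite_eq', if_pos (Finset.mem_range.2 hp), if_pos (Finset.mem_range.2 hq)] at e'
      omega
    · simp only [β]
      split_ifs with h3 h4
      · have := h0 h3.symm
        omega
      · omega
      · omega
    · intro i h
      refine ⟨(key i).1, ?_⟩
      have := (key (i - 1)).2
      rwa [Nat.sub_add_cancel h] at this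
  have h := congrFun (huniq β hβ) p
  simp [β] at h
  omega

lemma const_of (t d : ℕ) (lam : ℕ → ℕ) (h : IsAdmissible t d lam)
    (hc : lam 0 ≤ t ∨ t ≤ lam (d - 1)) : ∀ i, i < d → lam i = t := by
  obtain ⟨ha, hz, hs⟩ := h
  have hs' : (∑ i ∈ Finset.range d, lam i) = ∑ i ∈ Finset.range d, t := by
    rw [hs]; simp [mul_comm]
  intro i hi
  rcases hc with hc | hc
  · exact (Finset.sum_eq_sum_iff_of_le (fun i _ => (ha (Nat.zero_le i)).trans hc)).1 hs' i
      (Finset.mem_range.2 hi)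
  · refine ((Finset.sum_eq_sum_iff_of_le (fun i hi => hc.trans (ha ?_))).1 hs'.symm i
      (Finset.mem_range.2 hi)).symm
    have := Finset.mem_range.1 hi
    omega

lemma shape (t d : ℕ) (ht : 1 ≤ t) (hd : 3 ≤ d) (lam α : ℕ → ℕ) (hlam : IsAdmissible t d lam)
    (hα : IsPred t d α lam)
    (huniq : ∀ α', IsPred t d α' lam → α' = α) :
    ∃ p, p < d - 1 ∧ ∀ i, i < d - 1 → i ≠ p → lam (i + 1) = lam i := by
  have pt := perturb t d hd lam α hα huniq
  have cst := const_of t d lam hlam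
  obtain ⟨⟨ha, hz, hs⟩, hl, hu, hi⟩ := hα
  obtain ⟨la, lz, ls⟩ := hlam
  have e1 : ∀ i, α i ≤ lam i := by
    intro i
    rcases Nat.eq_zero_or_pos i with h | h
    · subst h; exact hl
    · exact (hi i h).1
  have e2 : ∀ i, lam (i + 1) ≤ α i := fun i => by
    have e2 := (hi (i + 1) (by omega)).2
    simpa only [Nat.add_sub_cancel] using e2
  obtain ⟨n, rfl⟩ : ∃ n, d = n + 1 := ⟨d - 1, by omega⟩
  simp only [Nat.add_sub_cancel] at *
  -- the box is not exceeded from below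
  by_cases hlo : ∃ p, p < n ∧ lam (p + 1) < α p ∧ (p = 0 → lam 0 < α 0 + t)
  · obtain ⟨p, hp, h1, h0⟩ := hlo
    have hU : ∀ q, q < n → q ≠ p → α q = lam q := by
      intro q hq hqp
      by_contra hne
      exact pt p q hp hq (Ne.symm hqp) h1 h0 (lt_of_le_of_ne (e1 q) hne)
    by_cases hpU : α p = lam p
    · -- all equal to the upper bound
      have : ∑ i ∈ Finset.range n, α i = ∑ i ∈ Finset.range n, lam i := by
        refine Finset.sum_congr rfl fun q hq => ?_
        by_cases h : q = p
        · subst h; exact hpU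
        · exact hU q (Finset.mem_range.1 hq) h
      rw [Finset.sum_range_succ, ← this, hs, Nat.mul_succ] at ls
      have c := cst (Or.inr (by omega))
      exact ⟨0, by omega, fun i hi _ => by rw [c i (by omega), c (i + 1) (by omega)]⟩
    · refine ⟨p, hp, fun i hin hip => ?_⟩
      by_contra hne
      have hlt : lam (i + 1) < lam i := lt_of_le_of_ne (la (Nat.le_succ i)) hne
      have hai := hU i hin hip
      refine pt i p hin hp hip (by omega) ?_ (lt_of_le_of_ne (e1 p) hpU)
      rintro rfl
      omega
  · push Not at hlo
    have hL : ∀ i, 1 ≤ i → i < n → α i = lam (i + 1) := by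
      intro i h1 hin
      by_contra hne
      have := hlo i hin (lt_of_le_of_ne (e2 i) (Ne.symm hne))
      omega
    obtain ⟨m, rfl⟩ : ∃ m, n = m + 1 := ⟨n - 1, by omega⟩
    rw [Finset.sum_range_succ'] at hs
    rw [Finset.sum_range_succ', Finset.sum_range_succ'] at ls
    have : ∑ i ∈ Finset.range m, α (i + 1) = ∑ i ∈ Finset.range m, lam (i + 1 + 1) :=
      Finset.sum_congr rfl fun i hi => hL (i + 1) (by omega)
        (by have := Finset.mem_range.1 hi; omega)
    rw [this] at hs
    rw [Nat.mul_succ t (m + 1)] at ls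
    simp only [Nat.zero_add] at ls
    by_cases h : α 0 = lam 1
    · have c := cst (Or.inl (by omega))
      exact ⟨0, by omega, fun i hi _ => by rw [c i (by omega), c (i + 1) (by omega)]⟩
    · have h3 := (hlo 0 (by omega) (lt_of_le_of_ne (e2 0) (Ne.symm h)))
      have h4 : lam 1 = 0 := by simp at h3; omega
      refine ⟨0, by omega, fun i hi hi0 => ?_⟩
      have := la (show 1 ≤ i by omega)
      have := la (show 1 ≤ i + 1 by omega)
      omega

lemma shape' (d : ℕ) (lam : ℕ → ℕ) 
    (h : ∃ p, p < d - 1 ∧ ∀ i, i < d - 1 → i ≠ p → lam (i + 1) = lam i) :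
    ∃ p, p < d - 1 ∧ (∀ i, i ≤ p → lam i = lam 0) ∧
      (∀ i, p < i → i < d → lam i = lam (d - 1)) := by
  obtain ⟨p, hp, h⟩ := h
  refine ⟨p, hp, ?_, ?_⟩
  · intro i
    induction i with
    | zero => intro _; rfl
    | succ i ih => intro hi; rw [h i (by omega) (by omega), ih (by omega)]
  · have : ∀ j, p < d - 1 - j → lam (d - 1 - j) = lam (d - 1) := by
      intro j
      induction j with
      | zero => intro _; rfl
      | succ j ih =>
        intro hj
        rw [← ih (by omega), ← h (d - 1 - (j + 1)) (by omega) (by omega)]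
        congr 1
        omega
    intro i hi hid
    have := this (d - 1 - i) (by omega)
    rwa [show d - 1 - (d - 1 - i) = i by omega] at this

lemma determined (t d : ℕ) (ht : 1 ≤ t) (hd : 4 ≤ d) (lam α : ℕ → ℕ)
    (hlam : IsAdmissible t d lam) (hα : IsPred t d α lam)
    (huniq : ∀ α', IsPred t d α' lam → α' = α)
    (hsh : ∃ p, p < d - 1 - 1 ∧ ∀ i, i < d - 1 - 1 → i ≠ p → α (i + 1) = α i) :
    (α 0 = α 1 ∧ ∀ i, i < d - 1 → lam i = α 0) ∨
    (α 1 < α 0 ∧ ∀ i, 1 ≤ i → i < d → lam i = α 1) := by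
  obtain ⟨k, hk, hk1, hk2⟩ := shape' d lam (shape t d ht (by omega) lam α hlam hα huniq)
  have cst := const_of t d lam hlam
  obtain ⟨⟨ha, hz, hs⟩, hl, hu, hi⟩ := hα
  obtain ⟨la, lz, ls⟩ := hlam
  have e1 : ∀ i, α i ≤ lam i := by
    intro i
    rcases Nat.eq_zero_or_pos i with h | h
    · subst h; exact hl
    · exact (hi i h).1
  have e2 : ∀ i, lam (i + 1) ≤ α i := fun i => by
    have e2 := (hi (i + 1) (by omega)).2
    simpa only [Nat.add_sub_cancel] using e2
  have a1 : ∀ i, i < k → α i = lam 0 := fun i h => by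
    have := e1 i; have := e2 i
    have := hk1 i (by omega); have := hk1 (i + 1) (by omega)
    omega
  have a2 : ∀ i, k < i → i < d - 1 → α i = lam (d - 1) := fun i h h' => by
    have := e1 i; have := e2 i
    have := hk2 i (by omega) (by omega); have := hk2 (i + 1) (by omega) (by omega)
    omega
  by_cases hc : lam 0 ≤ t ∨ t ≤ lam (d - 1)
  · have c := cst hc
    left
    have b : ∀ i, i < d - 1 → α i = t := fun i h => by
      have := e1 i; have := e2 i; have := c i (by omega); have := c (i + 1) (by omega)
      omega
    refine ⟨by rw [b 0 (by omega), b 1 (by omega)], fun i h => by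
      rw [b 0 (by omega), c i (by omega)]⟩
  · push Not at hc
    -- the middle entry
    have mid : α k + t = lam 0 + lam (d - 1) := by
      have f : ∀ i ∈ Finset.range (d - 1), lam i + (if i = k then α k else 0)
          = α i + (if i = k then lam 0 else 0) := by
        intro i hi
        have hi := Finset.mem_range.1 hi
        split_ifs with h
        · subst h; rw [hk1 i le_rfl, add_comm]
        · rcases lt_or_gt_of_ne h with h | h
          · rw [a1 i h, hk1 i h.le]
          · rw [a2 i h hi, hk2 i h (by omega)]
      have f' := Finset.sum_congr rfl f
      rw [Finset.sum_add_distrib, Finset.sum_add_distrib, Finset.sum_ite_eq',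
        Finset.sum_ite_eq', if_pos (Finset.mem_range.2 hk), if_pos (Finset.mem_range.2 hk),
        hs] at f'
      obtain ⟨n, rfl⟩ : ∃ n, d = n + 1 := ⟨d - 1, by omega⟩
      rw [Finset.sum_range_succ, Nat.mul_succ] at ls
      simp only [Nat.add_sub_cancel] at *
      omega
    rcases Nat.eq_zero_or_pos k with h | h
    · right
      subst h
      have := a2 1 (by omega) (by omega)
      exact ⟨by omega, fun i h h' => by rw [this, hk2 i (by omega) h']⟩
    · obtain ⟨m, hm, hm'⟩ := hsh
      have x1 := a1 (k - 1) (by omega)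
      have y1 : m = k - 1 := by
        by_contra hne
        have := hm' (k - 1) (by omega) (Ne.symm hne)
        rw [Nat.sub_add_cancel h] at this
        omega
      have y2 : k = d - 2 := by
        by_contra hne
        have := hm' k (by omega) (by omega)
        have := a2 (k + 1) (by omega) (by omega)
        omega
      left
      have z0 := a1 0 (by omega)
      have z1 := a1 1 (by omega)
      exact ⟨by omega, fun i h => by rw [z0, hk1 i (by omega)]⟩

lemma eq_of (t d : ℕ) (hd : 4 ≤ d) (gam lam : ℕ → ℕ) (hgam : IsAdmissible t d gam)
    (hlam : IsAdmissible t d lam)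
    (h : (∀ i, i < d - 1 → gam i = lam i) ∨ (∀ i, 1 ≤ i → i < d → gam i = lam i)) :
    gam = lam := by
  obtain ⟨n, rfl⟩ : ∃ n, d = n + 1 := ⟨d - 1, by omega⟩
  obtain ⟨-, gz, gs⟩ := hgam
  obtain ⟨-, lz, ls⟩ := hlam
  simp only [Nat.add_sub_cancel] at h
  funext i
  by_cases hi : n + 1 ≤ i
  · rw [gz i hi, lz i hi]
  rcases h with h | h
  · by_cases hin : i < n
    · exact h i hin
    · have : i = n := by omega
      subst this
      rw [Finset.sum_range_succ] at gs ls
      have : ∑ j ∈ Finset.range i, gam j = ∑ j ∈ Finset.range i, lam j :=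
        Finset.sum_congr rfl fun j hj => h j (Finset.mem_range.1 hj)
      omega
  · by_cases hin : 1 ≤ i
    · exact h i hin (by omega)
    · have : i = 0 := by omega
      subst this
      rw [Finset.sum_range_succ'] at gs ls
      have := Finset.sum_congr rfl fun j (hj : j ∈ Finset.range n) =>
        h (j + 1) (by omega) (by have := Finset.mem_range.1 hj; omega)
      omega

def alphaF (t u : ℕ) : ℕ → ℕ :=
  fun i => if i = 0 then t + u else if i = 1 then t - u else 0

lemma adm_two (t : ℕ) (β : ℕ → ℕ) (h : IsAdmissible t (3 - 1) β) :
    β 0 + β 1 = t * 2 ∧ ∀ i, 2 ≤ i → β i = 0 := by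
  obtain ⟨-, hz, hs⟩ := h
  simp [Finset.sum_range_succ] at hs
  exact ⟨hs, hz⟩

lemma adm_three (t : ℕ) (β : ℕ → ℕ) (h : IsAdmissible t 3 β) :
    β 0 + β 1 + β 2 = t * 3 ∧ β 1 ≤ β 0 ∧ β 2 ≤ β 1 ∧ ∀ i, 3 ≤ i → β i = 0 := by
  obtain ⟨ha, hz, hs⟩ := h
  simp [Finset.sum_range_succ] at hs
  exact ⟨hs, ha (by omega), ha (by omega), hz⟩

lemma alpha_adm (t u : ℕ) (hu : u ≤ t / 2) : IsAdmissible t (3 - 1) (alphaF t u) := by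
  refine ⟨?_, ?_, ?_⟩
  · intro i j h
    simp only [alphaF]
    split_ifs <;> omega
  · intro i h
    simp only [alphaF]
    split_ifs <;> omega
  · simp [Finset.sum_range_succ, alphaF]
    omega

lemma ext_two (β : ℕ → ℕ) (t u : ℕ) (h0 : β 0 = t + u) (h1 : β 1 = t - u)
    (h2 : ∀ i, 2 ≤ i → β i = 0) : β = alphaF t u := by
  funext i
  simp only [alphaF]
  split_ifs with h h'
  · subst h; exact h0
  · subst h'; exact h1
  · exact h2 i (by omega)

lemma gamma_pred (t u : ℕ) (hu : u ≤ t / 2) : IsPred t 3 (alphaF t u) (gammaF t u) ∧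
    ∀ β, IsPred t 3 β (gammaF t u) → β = alphaF t u := by
  refine ⟨⟨alpha_adm t u hu, ?_, ?_, ?_⟩, ?_⟩
  · simp [alphaF, gammaF]
  · simp [alphaF, gammaF]
  · intro i h
    simp only [alphaF, gammaF]
    split_ifs <;> omega
  · rintro β ⟨hb, h0, h1, hi⟩
    obtain ⟨hs, hz⟩ := adm_two t β hb
    have := hi 1 le_rfl
    simp [gammaF] at h0 h1 this
    exact ext_two β t u (by omega) (by omega) hz

lemma lambda_pred (t u : ℕ) (hu : u ≤ t / 2) : IsPred t 3 (alphaF t u) (lambdaF t u) ∧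
    ∀ β, IsPred t 3 β (lambdaF t u) → β = alphaF t u := by
  refine ⟨⟨alpha_adm t u hu, ?_, ?_, ?_⟩, ?_⟩
  · simp [alphaF, lambdaF]; omega
  · simp [alphaF, lambdaF]; omega
  · intro i h
    simp only [alphaF, lambdaF]
    split_ifs <;> omega
  · rintro β ⟨hb, h0, h1, hi⟩
    obtain ⟨hs, hz⟩ := adm_two t β hb
    have := hi 1 le_rfl
    have := hi 2 (by omega)
    simp [lambdaF] at *
    exact ext_two β t u (by omega) (by omega) hz

lemma alpha_chain (t u : ℕ) (hu : u ≤ t / 2) : UniqueChainBelow t 2 (alphaF t u) := by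
  refine ⟨fun i => if i = 0 then t else 0, ⟨⟨?_, ?_, ?_⟩, ?_, ?_, ?_⟩, ?_, trivial⟩
  · intro i j h
    dsimp only
    split_ifs <;> omega
  · intro i h
    dsimp only
    split_ifs <;> omega
  · simp
  · simp [alphaF]
  · simp [alphaF]; omega
  · intro i h
    simp only [alphaF]
    split_ifs <;> omega
  · rintro β ⟨⟨-, hz, hs⟩, -⟩
    simp at hs hz
    funext i
    split_ifs with h
    · subst h; exact hs
    · exact hz i (by omega)

lemma three_shape (t : ℕ) (ht : 1 ≤ t) (lam α : ℕ → ℕ) (hlam : IsAdmissible t 3 lam)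
    (hα : IsPred t 3 α lam) (huniq : ∀ α', IsPred t 3 α' lam → α' = α) :
    ∃ u, α 0 = t + u ∧ ((lam = gammaF t u ∧ u ≤ t / 2) ∨ lam = lambdaF t u) := by
  obtain ⟨p, hp, h⟩ := shape t 3 ht le_rfl lam α hlam hα huniq
  obtain ⟨hs, h10, h21, hz⟩ := adm_three t lam hlam
  obtain ⟨hb, h0, h1, hi⟩ := hα
  have ha := hb.1 (show 0 ≤ 1 by omega)
  obtain ⟨as, az⟩ := adm_two t α hb
  have i1 := hi 1 le_rfl
  have i2 := hi 2 (by omega)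
  simp at i1 i2
  refine ⟨α 0 - t, by omega, ?_⟩
  have hp' : p = 1 ∨ p = 0 := by omega
  rcases hp' with rfl | rfl
  · left
    have := h 0 (by omega) (by omega)
    simp at this
    refine ⟨?_, by omega⟩
    funext i
    simp only [gammaF]
    split_ifs with h h' h''
    · subst h; omega
    · subst h'; omega
    · subst h''; omega
    · exact hz i (by omega)
  · right
    have := h 1 (by omega) (by omega)
    simp at this
    funext i
    simp only [lambdaF]
    split_ifs with h h' h''
    · subst h; omega
    · subst h'; omega
    · subst h''; omega
    · exact hz i (by omega)

lemma gl_zero (t : ℕ) : gammaF t 0 = lambdaF t 0 := by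
  funext i
  simp [gammaF, lambdaF]

/-- Classification of `T`-shape relations of degree `d ≥ 3`: for distinct
`(t,d)`-admissible partitions `γ ≠ λ`, there is a common unique `t`-predecessor `α` of
both `γ` and `λ` whose chain of iterated `t`-predecessors is everywhere unique down to
the partition `(t)`, if and only if `d = 3` and `{γ, λ} = {γ_u, λ_u}` for some
`1 ≤ u ≤ ⌊t/2⌋`, where `γ_u = (t+u, t+u, t−2u)` and `λ_u = (t+2u, t−u, t−u)`. -/
theorem T_shape_relations_classification (t d : ℕ) (ht : 1 ≤ t) (hd : 3 ≤ d)
    (gam lam : ℕ → ℕ) (hgam : IsAdmissible t d gam) (hlam : IsAdmissible t d lam)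
    (hne : gam ≠ lam) :
    (∃ α : ℕ → ℕ, IsPred t d α gam ∧ (∀ α', IsPred t d α' gam → α' = α) ∧
        IsPred t d α lam ∧ (∀ α', IsPred t d α' lam → α' = α) ∧
        UniqueChainBelow t (d - 1) α) ↔
      (d = 3 ∧ ∃ u, 1 ≤ u ∧ u ≤ t / 2 ∧
        ((gam = gammaF t u ∧ lam = lambdaF t u) ∨
          (gam = lambdaF t u ∧ lam = gammaF t u))) := by
  constructor
  · rintro ⟨α, hg, hgu, hl, hlu, hch⟩
    by_cases h3 : d = 3
    · subst h3
      refine ⟨rfl, ?_⟩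
      obtain ⟨u, hu, h⟩ := three_shape t ht gam α hgam hg hgu
      obtain ⟨v, hv, h'⟩ := three_shape t ht lam α hlam hl hlu
      have : v = u := by omega
      subst this
      have hpos : 1 ≤ v := by
        by_contra hc
        have : v = 0 := by omega
        subst this
        rw [gl_zero] at h h'
        exact hne ((h.elim And.left id).trans (h'.elim And.left id).symm)
      rcases h with ⟨h, hb⟩ | h <;> rcases h' with ⟨h', hb'⟩ | h'
      · exact absurd (h.trans h'.symm) hne
      · exact ⟨v, hpos, hb, Or.inl ⟨h, h'⟩⟩
      · exact ⟨v, hpos, hb', Or.inr ⟨h, h'⟩⟩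
      · exact absurd (h.trans h'.symm) hne
    · exfalso
      have hd4 : 4 ≤ d := by omega
      have hsh : ∃ p, p < d - 1 - 1 ∧ ∀ i, i < d - 1 - 1 → i ≠ p → α (i + 1) = α i := by
        obtain ⟨e, rfl⟩ : ∃ e, d = e + 3 := ⟨d - 3, by omega⟩
        obtain ⟨nu, hn, hnu, -⟩ := hch
        exact shape t (e + 2) ht (by omega) α nu hg.1 hn hnu
      apply hne
      apply eq_of t d hd4 gam lam hgam hlam
      rcases determined t d ht hd4 gam α hgam hg hgu hsh with ⟨a, b⟩ | ⟨a, b⟩ <;>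
      rcases determined t d ht hd4 lam α hlam hl hlu hsh with ⟨a', b'⟩ | ⟨a', b'⟩
      · exact Or.inl fun i h => (b i h).trans (b' i h).symm
      · omega
      · omega
      · exact Or.inr fun i h h' => (b i h h').trans (b' i h h').symm
  · rintro ⟨rfl, u, hu1, hu2, ⟨rfl, rfl⟩ | ⟨rfl, rfl⟩⟩
    · exact ⟨alphaF t u, (gamma_pred t u hu2).1, (gamma_pred t u hu2).2,
        (lambda_pred t u hu2).1, (lambda_pred t u hu2).2, alpha_chain t u hu2⟩
    · exact ⟨alphaF t u, (lambda_pred t u hu2).1, (lambda_pred t u hu2).2,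
        (gamma_pred t u hu2).1, (gamma_pred t u hu2).2, alpha_chain t u hu2⟩
end
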